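/- For every integer L₀ ≥ 1 and all ε, δ > 0, there is n₀ = n₀(ε,δ,L₀) such that for every d ∈ [0,1) and every graph collection 𝐆 = (G_c : c ∈ 𝒞) on a vertex set V of size n ≥ n₀ with δn ≤ |𝒞| ≤ n/δ, there exist a partition V = V₀ ∪ V₁ ∪ … ∪ V_L, a partition 𝒞 = 𝒞₀ ∪ 𝒞₁ ∪ … ∪ 𝒞_M, and a spanning subgraph G'_c of G_c for each c ∈ 𝒞 such that: (i) L₀ ≤ L, M ≤ n₀ and |V₀| + |𝒞₀| ≤ εn; (ii) |V₁| = … = |V_L| = |𝒞₁| = … = |𝒞_M| =: m; (iii) Σ_{c∈𝒞} d_{G'_c}(v) > Σ_{c∈𝒞} d_{G_c}(v) − (3d/δ² + ε)n² for all v ∈ V, and e(G'_c) > e(G_c) − (3d/δ² + ε)n² for all c ∈ 𝒞; (iv) if for some c ∈ 𝒞 the graph G'_c has an edge with both endpoints in a single cluster V_i with i ∈ [L], then c ∈ 𝒞₀; (v) for every pair {h,i} of distinct indices in [L] and every j ∈ [M], either G'_c[V_h,V_i] has no edges for all c ∈ 𝒞_j, or the collection (G'_c[V_h,V_i] : c ∈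 𝒞_j) is (ε,d)-regular. -/

import Mathlib

open Finset
open scoped Classical

/-- Number of ordered pairs `(x,y) ∈ A × B` with `{x,y}` an edge of `G`. -/
noncomputable def pairCount {V : Type*} (G : SimpleGraph V) (A B : Finset V) : ℕ :=
  ((A ×ˢ B).filter (fun p => G.Adj p.1 p.2)).card

/-- Number of neighbours of `v` in `B`. -/
noncomputable def degIn {V : Type*} (G : SimpleGraph V) (v : V) (B : Finset V) : ℕ :=
  (B.filter (fun w => G.Adj v w)).card

/-- Degree of `v` in `G`. -/
noncomputable def degOf {V : Type*} [Fintype V] (G : SimpleGraph V) (v : V) : ℕ :=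
  ((univ : Finset V).filter (fun w => G.Adj v w)).card

/-- Number of edges of `G`. -/
noncomputable def edgeCnt {V : Type*} [Fintype V] (G : SimpleGraph V) : ℕ :=
  ((univ : Finset (Sym2 V)).filter (fun e => e ∈ G.edgeSet)).card

/-- Number of edges of `H` with one endpoint in `A` and the other in `B`. -/
noncomputable def eBetween {W : Type*} [Fintype W] (H : SimpleGraph W) (A B : Finset W) : ℕ :=
  ((univ : Finset (Sym2 W)).filter
    (fun e => e ∈ H.edgeSet ∧ ∃ x ∈ A, ∃ y ∈ B, e = s(x, y))).card

/-- A graph `H` on `h` vertices is `μ`-separable if there is `X ⊆ V(H)` with `|X| ≤ μ h`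
such that every connected component of `H - X` has at most `μ h` vertices. -/
def Separable {W : Type*} [Fintype W] (H : SimpleGraph W) (μ : ℝ) : Prop :=
  ∃ X : Finset W, (X.card : ℝ) ≤ μ * (Fintype.card W : ℝ) ∧
    ∀ K : (SimpleGraph.induce ((↑X : Set W)ᶜ) H).ConnectedComponent,
      (K.supp.ncard : ℝ) ≤ μ * (Fintype.card W : ℝ)

/-- A transversal copy of `H` in the graph collection `G`. -/
def HasTransversal {V C W : Type*} (G : C → SimpleGraph V) (H : SimpleGraph W) : Prop :=
  ∃ (τ : W → V) (σ : Sym2 W → C),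
    Function.Injective τ ∧ Set.InjOn σ H.edgeSet ∧
    ∀ x y, H.Adj x y → (G (σ s(x, y))).Adj (τ x) (τ y)

/-- Density of a collection of bipartite graphs. -/
noncomputable def colDensity {V C : Type*} (G : C → SimpleGraph V)
    (A B : Finset V) (D : Finset C) : ℝ :=
  (∑ c ∈ D, (pairCount (G c) A B : ℝ)) / ((D.card : ℝ) * (A.card : ℝ) * (B.card : ℝ))

/-- `(ε,d)`-regularity of a collection of bipartite graphs with parts `V₁, V₂`
and colour set `D`. -/
def ColReg {V C : Type*} (ε d : ℝ) (G : C → SimpleGraph V)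
    (V₁ V₂ : Finset V) (D : Finset C) : Prop :=
  d ≤ colDensity G V₁ V₂ D ∧
  ∀ V₁' ⊆ V₁, ∀ V₂' ⊆ V₂, ∀ D' ⊆ D,
    ε * (V₁.card : ℝ) ≤ (V₁'.card : ℝ) → ε * (V₂.card : ℝ) ≤ (V₂'.card : ℝ) →
    ε * (D.card : ℝ) ≤ (D'.card : ℝ) →
    |colDensity G V₁' V₂' D' - colDensity G V₁ V₂ D| < ε

/-- `(ε,d)`-superregularity of a collection of bipartite graphs. -/
def ColSuperReg {V C : Type*} (ε d : ℝ) (G : C → SimpleGraph V)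
    (V₁ V₂ : Finset V) (D : Finset C) : Prop :=
  ColReg ε d G V₁ V₂ D ∧
  (∀ v ∈ V₁, d * (V₂.card : ℝ) * (D.card : ℝ) ≤ ∑ c ∈ D, (degIn (G c) v V₂ : ℝ)) ∧
  (∀ v ∈ V₂, d * (V₁.card : ℝ) * (D.card : ℝ) ≤ ∑ c ∈ D, (degIn (G c) v V₁ : ℝ)) ∧
  (∀ c ∈ D, d * (V₁.card : ℝ) * (V₂.card : ℝ) ≤ (pairCount (G c) V₁ V₂ : ℝ))

/-- `(ε,d)`-half-superregularity of a collection of bipartite graphs. -/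
def ColHalfSuperReg {V C : Type*} (ε d : ℝ) (G : C → SimpleGraph V)
    (V₁ V₂ : Finset V) (D : Finset C) : Prop :=
  (∀ V₁' ⊆ V₁, ∀ V₂' ⊆ V₂, ∀ D' ⊆ D,
    ε * (V₁.card : ℝ) ≤ (V₁'.card : ℝ) → ε * (V₂.card : ℝ) ≤ (V₂'.card : ℝ) →
    ε * (D.card : ℝ) ≤ (D'.card : ℝ) →
    d * (D'.card : ℝ) * (V₁'.card : ℝ) * (V₂'.card : ℝ) ≤
      ∑ c ∈ D', (pairCount (G c) V₁' V₂' : ℝ)) ∧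
  (∀ v ∈ V₁, d * (V₂.card : ℝ) * (D.card : ℝ) ≤ ∑ c ∈ D, (degIn (G c) v V₂ : ℝ)) ∧
  (∀ v ∈ V₂, d * (V₁.card : ℝ) * (D.card : ℝ) ≤ ∑ c ∈ D, (degIn (G c) v V₁ : ℝ)) ∧
  (∀ c ∈ D, d * (V₁.card : ℝ) * (V₂.card : ℝ) ≤ (pairCount (G c) V₁ V₂ : ℝ))

/-- `(ε,d)`-half-superregularity of a bipartite graph (given by an adjacency relation)
with parts `V₁, V₂`. -/
def BipHalfSuper {V : Type*} (ε d : ℝ) (A : V → V → Prop) (V₁ V₂ : Finset V) : Prop :=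
  (∀ U₁ ⊆ V₁, ∀ U₂ ⊆ V₂,
    ε * (V₁.card : ℝ) ≤ (U₁.card : ℝ) → ε * (V₂.card : ℝ) ≤ (U₂.card : ℝ) →
    d * (U₁.card : ℝ) * (U₂.card : ℝ) ≤
      (((U₁ ×ˢ U₂).filter (fun p => A p.1 p.2)).card : ℝ)) ∧
  (∀ x ∈ V₁, d * (V₂.card : ℝ) ≤ ((V₂.filter (fun y => A x y)).card : ℝ)) ∧
  (∀ y ∈ V₂, d * (V₁.card : ℝ) ≤ ((V₁.filter (fun x => A x y)).card : ℝ))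

/-- Number of ordered triples `(x₁,x₂,x₃) ∈ U₁ × U₂ × U₃` with `{x₁,x₂,x₃}` an edge. -/
noncomputable def tripCount {V : Type*} (E : Set (Finset V)) (U₁ U₂ U₃ : Finset V) : ℕ :=
  ((U₁ ×ˢ U₂ ×ˢ U₃).filter
    (fun p => ({p.1, p.2.1, p.2.2} : Finset V) ∈ E)).card

/-- Density of the triple `(U₁,U₂,U₃)` in a `3`-graph. -/
noncomputable def tripDensity {V : Type*} (E : Set (Finset V)) (U₁ U₂ U₃ : Finset V) : ℝ :=
  (tripCount E U₁ U₂ U₃ : ℝ) / ((U₁.card : ℝ) * (U₂.card : ℝ) * (U₃.card : ℝ))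

/-- Degree of a vertex in a hypergraph: the number of edges containing it. -/
noncomputable def hDeg {V : Type*} [Fintype V] (E : Set (Finset V)) (v : V) : ℕ :=
  ((univ : Finset (Finset V)).filter (fun e => e ∈ E ∧ v ∈ e)).card

/-- Weak `(ε,d)`-regularity of a 3-partite triple in a 3-graph. -/
def TripReg {V : Type*} (ε d : ℝ) (E : Set (Finset V)) (V₁ V₂ V₃ : Finset V) : Prop :=
  d ≤ tripDensity E V₁ V₂ V₃ ∧
  ∀ U₁ ⊆ V₁, ∀ U₂ ⊆ V₂, ∀ U₃ ⊆ V₃,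
    ε * (V₁.card : ℝ) ≤ (U₁.card : ℝ) → ε * (V₂.card : ℝ) ≤ (U₂.card : ℝ) →
    ε * (V₃.card : ℝ) ≤ (U₃.card : ℝ) →
    |tripDensity E U₁ U₂ U₃ - tripDensity E V₁ V₂ V₃| < ε

/-- Weak `(ε,d)`-half-superregularity of a 3-partite triple in a 3-graph. -/
def TripHalfSuper {V : Type*} (ε d : ℝ) (E : Set (Finset V)) (V₁ V₂ V₃ : Finset V) : Prop :=
  (∀ U₁ ⊆ V₁, ∀ U₂ ⊆ V₂, ∀ U₃ ⊆ V₃,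
    ε * (V₁.card : ℝ) ≤ (U₁.card : ℝ) → ε * (V₂.card : ℝ) ≤ (U₂.card : ℝ) →
    ε * (V₃.card : ℝ) ≤ (U₃.card : ℝ) →
    d * (U₁.card : ℝ) * (U₂.card : ℝ) * (U₃.card : ℝ) ≤ (tripCount E U₁ U₂ U₃ : ℝ)) ∧
  (∀ x ∈ V₁, d * (V₂.card : ℝ) * (V₃.card : ℝ) ≤ (tripCount E {x} V₂ V₃ : ℝ)) ∧
  (∀ y ∈ V₂, d * (V₁.card : ℝ) * (V₃.card : ℝ) ≤ (tripCount E V₁ {y} V₃ : ℝ)) ∧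
  (∀ z ∈ V₃, d * (V₁.card : ℝ) * (V₂.card : ℝ) ≤ (tripCount E V₁ V₂ {z} : ℝ))

/-- A copy of the 1-expansion of `H` in a 3-graph with edge set `E`. -/
def HasExpansionCopy {V W : Type*} (E : Set (Finset V)) (H : SimpleGraph W) : Prop :=
  ∃ (ρv : W → V) (ρe : Sym2 W → V),
    Function.Injective ρv ∧ Set.InjOn ρe H.edgeSet ∧
    (∀ x, ∀ e ∈ H.edgeSet, ρv x ≠ ρe e) ∧
    ∀ x y, H.Adj x y → ({ρv x, ρv y, ρe s(x, y)} : Finset V) ∈ E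

/-- Number of edges (as functions picking one vertex per part) inside the sets `U i`. -/
noncomputable def kCount {V : Type*} {k : ℕ} (E : Set (Fin k → V)) (U : Fin k → Finset V) : ℕ :=
  ((Fintype.piFinset U).filter (fun e => e ∈ E)).card

/-- Density of a `k`-tuple in a `k`-partite `k`-graph. -/
noncomputable def kDensity {V : Type*} {k : ℕ} (E : Set (Fin k → V)) (U : Fin k → Finset V) : ℝ :=
  (kCount E U : ℝ) / ∏ i, ((U i).card : ℝ)

/-- Degree of `x` as a vertex of the `i`-th part of a `k`-partite `k`-graph. -/
noncomputable def kDegAt {V : Type*} [Fintype V] {k : ℕ} (E : Set (Fin k → V))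
    (i : Fin k) (x : V) : ℕ :=
  ((univ : Finset (Fin k → V)).filter (fun e => e ∈ E ∧ e i = x)).card

/-- Weak ε-regularity of a `k`-tuple in a `k`-partite `k`-graph. -/
def KTupleReg {V : Type*} {k : ℕ} (ε : ℝ) (E : Set (Fin k → V)) (Wp : Fin k → Finset V) : Prop :=
  ∀ U : Fin k → Finset V, (∀ i, U i ⊆ Wp i) →
    (∀ i, ε * ((Wp i).card : ℝ) ≤ ((U i).card : ℝ)) →
    |kDensity E U - kDensity E Wp| < ε

/-- Weak `(ε,d)`-regularity of a `k`-partite `k`-graph with parts `P`. -/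
def KReg {V : Type*} {k : ℕ} (ε d : ℝ) (E : Set (Fin k → V)) (P : Fin k → Finset V) : Prop :=
  d ≤ kDensity E P ∧
  ∀ U : Fin k → Finset V, (∀ i, U i ⊆ P i) →
    (∀ i, ε * ((P i).card : ℝ) ≤ ((U i).card : ℝ)) →
    |kDensity E U - kDensity E P| < ε

/-- Weak `(ε,d)`-superregularity of a `k`-partite `k`-graph with parts `P`. -/
def KSuper {V : Type*} [Fintype V] {k : ℕ} (ε d : ℝ) (E : Set (Fin k → V))
    (P : Fin k → Finset V) : Prop :=
  KReg ε d E P ∧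
  ∀ i, ∀ x ∈ P i, d * (∏ j, ((P j).card : ℝ)) / ((P i).card : ℝ) ≤ (kDegAt E i x : ℝ)

/-- Weak `(ε,d)`-half-superregularity of a `k`-partite `k`-graph with parts `P`. -/
def KHalfSuper {V : Type*} [Fintype V] {k : ℕ} (ε d : ℝ) (E : Set (Fin k → V))
    (P : Fin k → Finset V) : Prop :=
  (∀ U : Fin k → Finset V, (∀ i, U i ⊆ P i) →
    (∀ i, ε * ((P i).card : ℝ) ≤ ((U i).card : ℝ)) →
    d ≤ kDensity E U) ∧
  ∀ i, ∀ x ∈ P i, d * (∏ j, ((P j).card : ℝ)) / ((P i).card : ℝ) ≤ (kDegAt E i x : ℝ)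

/-- An `R`-template: vertex clusters `Vc`, colour clusters `Cc i j` (one for each
edge `ij` of `R`), and for each colour `c ∈ Cc i j` a bipartite graph `Ge c i j`
with parts `Vc i`, `Vc j`.  The graph `G_c` of the collection is the union of the
`Ge c i j` over the edges `ij` of `R` whose colour cluster contains `c`. -/
structure GTemplate (V C : Type*) (r : ℕ) where
  R : SimpleGraph (Fin r)
  Vc : Fin r → Finset V
  Cc : Fin r → Fin r → Finset C
  Ge : C → Fin r → Fin r → SimpleGraph V
  Cc_symm : ∀ i j, Cc i j = Cc j i
  Ge_symm : ∀ c i j, Ge c i j = Ge c j i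
  Vc_disj : ∀ i j, i ≠ j → Disjoint (Vc i) (Vc j)
  Cc_support : ∀ i j, ¬ R.Adj i j → Cc i j = ∅
  Ge_support : ∀ c i j, c ∉ Cc i j → Ge c i j = ⊥
  Ge_bipartite : ∀ c i j x y, (Ge c i j).Adj x y →
    (x ∈ Vc i ∧ y ∈ Vc j) ∨ (x ∈ Vc j ∧ y ∈ Vc i)

namespace GTemplate

variable {V C : Type*} {r : ℕ}

/-- The graph `G_c` of the template: the union of the bipartite pieces. -/
noncomputable def Gc (T : GTemplate V C r) (c : C) : SimpleGraph V :=
  ⨆ i, ⨆ j, T.Ge c i j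

/-- `T` is an `R`-template with parameters `(m, ε, d, δ)`. -/
def IsParam (T : GTemplate V C r) (m ε d δ : ℝ) : Prop :=
  (∀ j, m ≤ ((T.Vc j).card : ℝ) ∧ ((T.Vc j).card : ℝ) ≤ m / δ) ∧
  (∀ i j, T.R.Adj i j → δ * m ≤ ((T.Cc i j).card : ℝ)) ∧
  (∀ i j, T.R.Adj i j →
    ColReg ε d (fun c => T.Ge c i j) (T.Vc i) (T.Vc j) (T.Cc i j))

/-- `T` is a super `R`-template with parameters `(m, ε, d, δ)`. -/
def IsSuperParam (T : GTemplate V C r) (m ε d δ : ℝ) : Prop :=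
  (∀ j, m ≤ ((T.Vc j).card : ℝ) ∧ ((T.Vc j).card : ℝ) ≤ m / δ) ∧
  (∀ i j, T.R.Adj i j → δ * m ≤ ((T.Cc i j).card : ℝ)) ∧
  (∀ i j, T.R.Adj i j →
    ColSuperReg ε d (fun c => T.Ge c i j) (T.Vc i) (T.Vc j) (T.Cc i j))

/-- `T` is a half-super `R`-template with parameters `(m, ε, d, δ)`. -/
def IsHalfSuperParam (T : GTemplate V C r) (m ε d δ : ℝ) : Prop :=
  (∀ j, m ≤ ((T.Vc j).card : ℝ) ∧ ((T.Vc j).card : ℝ) ≤ m / δ) ∧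
  (∀ i j, T.R.Adj i j → δ * m ≤ ((T.Cc i j).card : ℝ)) ∧
  (∀ i j, T.R.Adj i j →
    ColHalfSuperReg ε d (fun c => T.Ge c i j) (T.Vc i) (T.Vc j) (T.Cc i j))

/-- `T` is a semi-super `R`-template with parameters `(m, ε, d, δ)`. -/
def IsSemiSuperParam (T : GTemplate V C r) (m ε d δ : ℝ) : Prop :=
  T.IsParam m ε d δ ∧
  ∀ i j, T.R.Adj i j →
    (∀ v ∈ T.Vc i, d * ((T.Vc j).card : ℝ) * ((T.Cc i j).card : ℝ) ≤
      ∑ c ∈ T.Cc i j, (degIn (T.Ge c i j) v (T.Vc j) : ℝ)) ∧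
    (∀ v ∈ T.Vc j, d * ((T.Vc i).card : ℝ) * ((T.Cc i j).card : ℝ) ≤
      ∑ c ∈ T.Cc i j, (degIn (T.Ge c i j) v (T.Vc i) : ℝ))

/-- The template is rainbow: the colour clusters are pairwise disjoint. -/
def Rainbow (T : GTemplate V C r) : Prop :=
  ∀ i j k l, T.R.Adj i j → T.R.Adj k l → s(i, j) ≠ s(k, l) →
    Disjoint (T.Cc i j) (T.Cc k l)

/-- Adjacency in the `l`-thick graph of the template, between clusters `i` and `j`. -/
def ThickAdj (T : GTemplate V C r) (l : ℝ) (i j : Fin r) (x y : V) : Prop :=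
  l * ((T.Cc i j).card : ℝ) ≤
    (((T.Cc i j).filter (fun c => (T.Ge c i j).Adj x y)).card : ℝ)

end GTemplate


/-! ### Energy of labellings -/

/-- The average of `f` over the fibre of `r` through `ω`. -/
noncomputable def fibAvg {Ω ρ : Type} [Fintype Ω] (f : Ω → ℝ) (r : Ω → ρ) (ω : Ω) : ℝ :=
  (∑ ω' ∈ univ.filter (fun ω' => r ω' = r ω), f ω') /
    ((univ.filter (fun ω' => r ω' = r ω)).card : ℝ)

/-- Energy of a labelling. -/
noncomputable def energy {Ω ρ : Type} [Fintype Ω] (f : Ω → ℝ) (r : Ω → ρ) : ℝ :=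
  ∑ ω, fibAvg f r ω ^ 2

lemma fibAvg_congr {Ω ρ : Type} [Fintype Ω] (f : Ω → ℝ) (r : Ω → ρ) {a b : Ω}
    (h : r a = r b) : fibAvg f r a = fibAvg f r b := by
  unfold fibAvg; rw [h]

lemma sum_fibAvg_mul {Ω ρ : Type} [Fintype Ω] (f : Ω → ℝ) (r : Ω → ρ) (h : Ω → ℝ)
    (hh : ∀ a b, r a = r b → h a = h b) :
    ∑ ω, fibAvg f r ω * h ω = ∑ ω, f ω * h ω := by
  have h1 : ∀ ω, fibAvg f r ω * h ω = ∑ ω', if r ω' = r ω then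
      f ω' * h ω' / ((univ.filter (fun ω'' => r ω'' = r ω')).card : ℝ) else 0 := by
    intro ω
    unfold fibAvg
    rw [div_mul_eq_mul_div, Finset.sum_mul, Finset.sum_div, Finset.sum_filter]
    refine Finset.sum_congr rfl fun ω' _ => ?_
    split_ifs with hr
    · rw [hh ω' ω hr, hr]
    · rfl
  simp_rw [h1]
  rw [Finset.sum_comm]
  refine Finset.sum_congr rfl fun ω' _ => ?_
  rw [← Finset.sum_filter, Finset.sum_const, nsmul_eq_mul]
  have h2 : (univ.filter (fun ω => r ω' = r ω)) = univ.filter (fun ω'' => r ω'' = r ω') := by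
    ext; simp [eq_comm]
  rw [h2]
  have h3 : ((univ.filter (fun ω'' => r ω'' = r ω')).card : ℝ) ≠ 0 := by
    have : 0 < (univ.filter (fun ω'' => r ω'' = r ω')).card :=
      Finset.card_pos.mpr ⟨ω', by simp⟩
    exact_mod_cast this.ne'
  field_simp

lemma energy_le {Ω ρ : Type} [Fintype Ω] (f : Ω → ℝ) (r : Ω → ρ)
    (h0 : ∀ ω, 0 ≤ f ω) (h1 : ∀ ω, f ω ≤ 1) : energy f r ≤ (Fintype.card Ω : ℝ) := by
  have h2 := sum_fibAvg_mul f r (fibAvg f r) (fun a b h => fibAvg_congr f r h)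
  have h3 : 0 ≤ ∑ ω, (f ω - fibAvg f r ω) ^ 2 := Finset.sum_nonneg fun _ _ => sq_nonneg _
  have h4 : ∑ ω, (f ω - fibAvg f r ω) ^ 2 =
      ∑ ω, f ω ^ 2 - 2 * (∑ ω, f ω * fibAvg f r ω) + ∑ ω, fibAvg f r ω * fibAvg f r ω := by
    rw [Finset.mul_sum, ← Finset.sum_sub_distrib, ← Finset.sum_add_distrib]
    exact Finset.sum_congr rfl fun _ _ => by ring
  have h5 : ∑ ω, f ω ^ 2 ≤ ∑ _ω : Ω, (1 : ℝ) :=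
    Finset.sum_le_sum fun ω _ => by nlinarith [h0 ω, h1 ω]
  have h6 : energy f r = ∑ ω, fibAvg f r ω * fibAvg f r ω :=
    Finset.sum_congr rfl fun _ _ => by ring
  simp only [Finset.sum_const, Finset.card_univ, nsmul_eq_mul, mul_one] at h5
  linarith

lemma energy_nonneg {Ω ρ : Type} [Fintype Ω] (f : Ω → ℝ) (r : Ω → ρ) : 0 ≤ energy f r :=
  Finset.sum_nonneg fun _ _ => sq_nonneg _

lemma energy_pyth {Ω ρ ρ' : Type} [Fintype Ω] (f : Ω → ℝ) (r : Ω → ρ) (r' : Ω → ρ')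
    (hr : ∀ a b, r' a = r' b → r a = r b) :
    energy f r' = energy f r + ∑ ω, (fibAvg f r' ω - fibAvg f r ω) ^ 2 := by
  have h1 := sum_fibAvg_mul f r' (fibAvg f r) (fun a b h => fibAvg_congr f r (hr a b h))
  have h2 := sum_fibAvg_mul f r (fibAvg f r) (fun a b h => fibAvg_congr f r h)
  have h4 : ∑ ω, (fibAvg f r' ω - fibAvg f r ω) ^ 2 =
      ∑ ω, fibAvg f r' ω ^ 2 - 2 * (∑ ω, fibAvg f r' ω * fibAvg f r ω)
        + ∑ ω, fibAvg f r ω * fibAvg f r ω := by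
    rw [Finset.mul_sum, ← Finset.sum_sub_distrib, ← Finset.sum_add_distrib]
    exact Finset.sum_congr rfl fun _ _ => by ring
  have h6 : energy f r = ∑ ω, fibAvg f r ω * fibAvg f r ω :=
    Finset.sum_congr rfl fun _ _ => by ring
  have h7 : energy f r' = ∑ ω, fibAvg f r' ω ^ 2 := rfl
  linarith

/-- Density of `f` on a finite set. -/
noncomputable def setDens {Ω : Type} (f : Ω → ℝ) (S : Finset Ω) : ℝ :=
  (∑ ω ∈ S, f ω) / (S.card : ℝ)

lemma energy_incr {Ω ρ ρ' τ : Type} [Fintype Ω] (f : Ω → ℝ) (r : Ω → ρ) (r' : Ω → ρ')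
    (hr : ∀ a b, r' a = r' b → r a = r b) (I : Finset τ) (S T : τ → Finset Ω) (e : ℝ)
    (he : 0 < e)
    (hST : ∀ t ∈ I, S t ⊆ T t)
    (hdisj : ∀ t ∈ I, ∀ s ∈ I, t ≠ s → Disjoint (T t) (T s))
    (hT : ∀ t ∈ I, ∀ a ∈ T t, ∀ b, b ∈ T t ↔ r b = r a)
    (hS : ∀ t ∈ I, ∀ a b, r' a = r' b → a ∈ S t → b ∈ S t)
    (hcard : ∀ t ∈ I, e ^ 3 * ((T t).card : ℝ) ≤ ((S t).card : ℝ))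
    (hdens : ∀ t ∈ I, e ≤ |setDens f (S t) - setDens f (T t)|) :
    energy f r + e ^ 5 * ∑ t ∈ I, ((T t).card : ℝ) ≤ energy f r' := by
  rw [energy_pyth f r r' hr]
  set g := fun ω => (fibAvg f r' ω - fibAvg f r ω) with hg
  have key : ∀ t ∈ I, e ^ 5 * ((T t).card : ℝ) ≤ ∑ ω ∈ S t, g ω ^ 2 := by
    intro t ht
    have hCS : (∑ ω ∈ S t, g ω) ^ 2 ≤ ((S t).card : ℝ) * ∑ ω ∈ S t, g ω ^ 2 :=
      sq_sum_le_card_mul_sum_sq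
    rcases (S t).eq_empty_or_nonempty with hSe | hSne
    · have := hcard t ht
      rw [hSe] at this ⊢
      simp only [Finset.card_empty, Nat.cast_zero, Finset.sum_empty] at this ⊢
      have h5 : e ^ 5 * ((T t).card : ℝ) = e ^ 2 * (e ^ 3 * ((T t).card : ℝ)) := by ring
      rw [h5]
      nlinarith [sq_nonneg e]
    have hSpos : (0 : ℝ) < ((S t).card : ℝ) := by exact_mod_cast Finset.card_pos.mpr hSne
    have hs1 : ∑ ω ∈ S t, fibAvg f r' ω = ∑ ω ∈ S t, f ω := by
      have := sum_fibAvg_mul f r' (fun ω => if ω ∈ S t then 1 else 0) (by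
        intro a b hab
        by_cases ha : a ∈ S t
        · simp [ha, hS t ht a b hab ha]
        · have : b ∉ S t := fun hb => ha (hS t ht b a hab.symm hb)
          simp [ha, this])
      simpa using this
    have hs2 : ∀ ω ∈ S t, fibAvg f r ω = setDens f (T t) := by
      intro ω hω
      have : univ.filter (fun ω' => r ω' = r ω) = T t := by
        ext b; simp [hT t ht ω (hST t ht hω) b]
      unfold fibAvg setDens
      rw [this]
    have hs3 : ∑ ω ∈ S t, g ω =
        ((S t).card : ℝ) * (setDens f (S t) - setDens f (T t)) := by
      simp only [hg]
      rw [Finset.sum_sub_distrib, hs1, Finset.sum_congr rfl hs2, Finset.sum_const, nsmul_eq_mul]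
      unfold setDens
      field_simp
    rw [hs3] at hCS
    have hd2 : e ^ 2 ≤ (setDens f (S t) - setDens f (T t)) ^ 2 := by
      rw [← sq_abs (setDens f (S t) - setDens f (T t))]
      exact pow_le_pow_left₀ he.le (hdens t ht) 2
    have hc := hcard t ht
    have h1 : ((S t).card : ℝ) * (setDens f (S t) - setDens f (T t)) ^ 2 ≤ ∑ ω ∈ S t, g ω ^ 2 := by
      have : ((S t).card : ℝ) * (((S t).card : ℝ) * (setDens f (S t) - setDens f (T t)) ^ 2)
          ≤ ((S t).card : ℝ) * ∑ ω ∈ S t, g ω ^ 2 := by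
        calc _ = (((S t).card : ℝ) * (setDens f (S t) - setDens f (T t))) ^ 2 := by ring
          _ ≤ _ := hCS
      exact le_of_mul_le_mul_left this hSpos
    calc e ^ 5 * ((T t).card : ℝ) = (e ^ 3 * ((T t).card : ℝ)) * e ^ 2 := by ring
      _ ≤ ((S t).card : ℝ) * (setDens f (S t) - setDens f (T t)) ^ 2 :=
        mul_le_mul hc hd2 (by positivity) hSpos.le
      _ ≤ _ := h1
  have h2 : ∑ t ∈ I, ∑ ω ∈ S t, g ω ^ 2 ≤ ∑ ω, g ω ^ 2 := by
    rw [← Finset.sum_biUnion]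
    · exact Finset.sum_le_sum_of_subset_of_nonneg (Finset.subset_univ _)
        (fun _ _ _ => sq_nonneg _)
    · intro t ht s hs hts
      exact (hdisj t ht s hs hts).mono (hST t ht) (hST s hs)
  rw [Finset.mul_sum]
  have := Finset.sum_le_sum key
  linarith

/-! ### Equitable chopping and the regularity lemma -/

lemma card_family {X : Type} (𝒜 : Finset (Finset X)) (m : ℕ)
    (hc : ∀ A ∈ 𝒜, A.card = m) (hd : ∀ A ∈ 𝒜, ∀ B ∈ 𝒜, A ≠ B → Disjoint A B) :
    (𝒜.biUnion id).card = 𝒜.card * m := by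
  have h := Finset.card_biUnion (s := 𝒜) (t := id) (fun A hA B hB h => hd A hA B hB h)
  rw [h]
  simp only [id]
  rw [Finset.sum_congr rfl hc, Finset.sum_const, smul_eq_mul]

lemma chop {X : Type} [Fintype X] {a : ℕ} (p : X → Fin a) (m : ℕ) (hm : 0 < m) :
    ∃ 𝒜 : Finset (Finset X), (∀ A ∈ 𝒜, A.card = m) ∧
      (∀ A ∈ 𝒜, ∀ B ∈ 𝒜, A ≠ B → Disjoint A B) ∧
      (∀ A ∈ 𝒜, ∀ x ∈ A, ∀ y ∈ A, p x = p y) ∧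
      (univ \ 𝒜.biUnion id).card ≤ a * m := by
  let F : Finset (Finset (Finset X)) := univ.filter (fun 𝒜 => (∀ A ∈ 𝒜, A.card = m) ∧
      (∀ A ∈ 𝒜, ∀ B ∈ 𝒜, A ≠ B → Disjoint A B) ∧
      (∀ A ∈ 𝒜, ∀ x ∈ A, ∀ y ∈ A, p x = p y))
  have hne : F.Nonempty := ⟨∅, by simp [F]⟩
  obtain ⟨𝒜, hA, hmax⟩ := Finset.exists_max_image F Finset.card hne
  have hA' := (Finset.mem_filter.mp hA).2
  obtain ⟨h1, h2, h3⟩ := hA'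
  refine ⟨𝒜, h1, h2, h3, ?_⟩
  by_contra hlt
  push Not at hlt
  have hpig : ∃ i ∈ (univ : Finset (Fin a)),
      m < ((univ \ 𝒜.biUnion id).filter (fun x => p x = i)).card := by
    apply Finset.exists_lt_card_fiber_of_mul_lt_card_of_maps_to
    · intro x _; exact Finset.mem_univ _
    · simpa using hlt
  obtain ⟨i, _, hi⟩ := hpig
  obtain ⟨B, hB, hBc⟩ := Finset.exists_subset_card_eq hi.le
  have hBx : ∀ x ∈ B, (∀ A ∈ 𝒜, x ∉ A) ∧ p x = i := by
    intro x hx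
    have := hB hx
    simp only [Finset.mem_filter, Finset.mem_sdiff, Finset.mem_univ, true_and,
      Finset.mem_biUnion, id, not_exists, not_and] at this
    exact this
  have hBd : ∀ A ∈ 𝒜, Disjoint B A := by
    intro A hA
    rw [Finset.disjoint_left]
    intro x hx
    exact (hBx x hx).1 A hA
  have hBn : B ∉ 𝒜 := by
    intro hB'
    have hpos : 0 < B.card := by omega
    obtain ⟨x, hx⟩ := Finset.card_pos.mp hpos
    exact (hBx x hx).1 B hB' hx
  have hins : insert B 𝒜 ∈ F := by
    simp only [F, Finset.mem_filter, Finset.mem_univ, true_and]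
    refine ⟨?_, ?_, ?_⟩
    · intro A hA
      rcases Finset.mem_insert.mp hA with rfl | hA
      · exact hBc
      · exact h1 A hA
    · intro A hA A' hA' hne
      rcases Finset.mem_insert.mp hA with rfl | hA
      · rcases Finset.mem_insert.mp hA' with rfl | hA'
        · exact absurd rfl hne
        · exact hBd _ hA'
      · rcases Finset.mem_insert.mp hA' with hh | hA'
        · rw [hh]; exact (hBd _ hA).symm
        · exact h2 A hA A' hA' hne
    · intro A hA x hx y hy
      rcases Finset.mem_insert.mp hA with rfl | hA
      · rw [(hBx x hx).2, (hBx y hy).2]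
      · exact h3 A hA x hx y hy
  have := hmax _ hins
  rw [Finset.card_insert_of_notMem hBn] at this
  omega

/-- Regularity without the density condition. -/
def RegE {V C : Type} (e : ℝ) (G : C → SimpleGraph V) (A B : Finset V) (D : Finset C) : Prop :=
  ∀ A' ⊆ A, ∀ B' ⊆ B, ∀ D' ⊆ D,
    e * (A.card : ℝ) ≤ (A'.card : ℝ) → e * (B.card : ℝ) ≤ (B'.card : ℝ) →
    e * (D.card : ℝ) ≤ (D'.card : ℝ) →
    |colDensity G A' B' D' - colDensity G A B D| < e

/-- An equitable pair of families with few irregular triples. -/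
structure GoodChop {V C : Type} [Fintype V] [Fintype C] (e η : ℝ) (G : C → SimpleGraph V) (K : ℕ)
    (𝒜 : Finset (Finset V)) (𝒟 : Finset (Finset C)) (m : ℕ) : Prop where
  mpos : 0 < m
  mle : (m : ℝ) ≤ η * (Fintype.card V : ℝ)
  cA : ∀ A ∈ 𝒜, A.card = m
  cD : ∀ A ∈ 𝒟, A.card = m
  dA : ∀ A ∈ 𝒜, ∀ B ∈ 𝒜, A ≠ B → Disjoint A B
  dD : ∀ A ∈ 𝒟, ∀ B ∈ 𝒟, A ≠ B → Disjoint A B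
  lA : ((univ \ 𝒜.biUnion id).card : ℝ) ≤ η * (Fintype.card V : ℝ)
  lD : ((univ \ 𝒟.biUnion id).card : ℝ) ≤ η * (Fintype.card V : ℝ)
  kA : 𝒜.card ≤ K
  kD : 𝒟.card ≤ K
  irr : (((𝒜 ×ˢ 𝒜 ×ˢ 𝒟).filter (fun t => ¬ RegE e G t.1 t.2.1 t.2.2)).card : ℝ) * (m : ℝ) ^ 3
    ≤ e * ((Fintype.card V : ℝ) ^ 2 * (Fintype.card C : ℝ))

/-- Indicator of coloured edges. -/
noncomputable def adjF {V C : Type} (G : C → SimpleGraph V) : V × V × C → ℝ :=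
  fun ω => if (G ω.2.2).Adj ω.1 ω.2.1 then 1 else 0

lemma sum_adjF {V C : Type} (G : C → SimpleGraph V) (A B : Finset V) (D : Finset C) :
    ∑ ω ∈ A ×ˢ B ×ˢ D, adjF G ω = ∑ c ∈ D, (pairCount (G c) A B : ℝ) := by
  unfold pairCount adjF
  simp_rw [Finset.card_filter, Finset.sum_product]
  push_cast
  rw [Finset.sum_comm]
  simp_rw [Finset.sum_comm (s := A) (t := D), Finset.sum_comm (s := B) (t := D)]
  refine Finset.sum_congr rfl fun c _ => ?_
  rw [Finset.sum_comm]

lemma setDens_adjF {V C : Type} (G : C → SimpleGraph V) (A B : Finset V) (D : Finset C) :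
    setDens (adjF G) (A ×ˢ B ×ˢ D) = colDensity G A B D := by
  unfold setDens colDensity
  rw [sum_adjF, Finset.card_product, Finset.card_product]
  push_cast
  congr 1
  ring

/-- The product labelling. -/
def lab {V C ι κ : Type} (p : V → ι) (q : C → κ) : V × V × C → ι × ι × κ :=
  fun ω => (p ω.1, p ω.2.1, q ω.2.2)

lemma energy_mono {Ω ρ ρ' : Type} [Fintype Ω] (f : Ω → ℝ) (r : Ω → ρ) (r' : Ω → ρ')
    (hr : ∀ a b, r' a = r' b → r a = r b) : energy f r ≤ energy f r' := by
  rw [energy_pyth f r r' hr]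
  have : 0 ≤ ∑ ω, (fibAvg f r' ω - fibAvg f r ω) ^ 2 := Finset.sum_nonneg fun _ _ => sq_nonneg _
  linarith

lemma exists_fin_label {X ι : Type} [Fintype ι] (p : X → ι) (k : ℕ) (h : Fintype.card ι ≤ k) :
    ∃ p' : X → Fin k, ∀ x y, p' x = p' y → p x = p y := by
  obtain ⟨φ⟩ := Function.Embedding.nonempty_of_card_le (α := ι) (β := Fin k) (by simpa using h)
  exact ⟨fun x => φ (p x), fun x y hxy => φ.injective hxy⟩

/-- Label by membership in the members of a family. -/
def memLab {X ι : Type} (𝒜 : Finset (Finset X)) (p : X → ι) : X → ι × (𝒜 → Prop) :=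
  fun x => (p x, fun A => x ∈ A.1)

lemma memLab_fib {X ι : Type} (𝒜 : Finset (Finset X)) (p : X → ι)
    (hd : ∀ A ∈ 𝒜, ∀ B ∈ 𝒜, A ≠ B → Disjoint A B)
    (hp : ∀ A ∈ 𝒜, ∀ x ∈ A, ∀ y ∈ A, p x = p y) (A : Finset X) (hA : A ∈ 𝒜) (a b : X)
    (ha : a ∈ A) : b ∈ A ↔ memLab 𝒜 p b = memLab 𝒜 p a := by
  constructor
  · intro hb
    unfold memLab
    refine Prod.ext (hp A hA b hb a ha) ?_
    funext B
    have huniq : ∀ x ∈ A, x ∈ B.1 → A = B.1 := by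
      intro x hx hxB
      by_contra hne
      exact Finset.disjoint_left.mp (hd A hA B.1 B.2 hne) hx hxB
    apply propext
    constructor
    · intro h; show a ∈ B.1; rw [← huniq b hb h]; exact ha
    · intro h; show b ∈ B.1; rw [← huniq a ha h]; exact hb
  · intro h
    have h2 := congrFun (congrArg Prod.snd h) ⟨A, hA⟩
    simp only [memLab] at h2
    exact h2.mpr ha

lemma step (e η δ : ℝ) (he : 0 < e) (hη : 0 < η) (hδ : 0 < δ) (hδ1 : δ ≤ 1)
    (a : ℕ) (ha : 1 ≤ a) :
    ∃ a' : ℕ, 1 ≤ a' ∧ ∀ (V : Type) [Fintype V] (C : Type) [Fintype C] (G : C → SimpleGraph V),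
      a' ≤ Fintype.card V → (Fintype.card C : ℝ) ≤ (Fintype.card V : ℝ) / δ →
      ∀ (p : V → Fin a) (q : C → Fin a),
      (∃ 𝒜 𝒟 m, GoodChop e η G a' 𝒜 𝒟 m) ∨
      ∃ (p' : V → Fin a') (q' : C → Fin a'),
        energy (adjF G) (lab p q) +
          e ^ 6 * ((Fintype.card V : ℝ) ^ 2 * (Fintype.card C : ℝ)) ≤
        energy (adjF G) (lab p' q') := by
  set K : ℕ := ⌈2 * (a : ℝ) / (η * δ)⌉₊ with hK
  have haR : (1 : ℝ) ≤ (a : ℝ) := by exact_mod_cast ha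
  have hKR : 2 * (a : ℝ) / (η * δ) ≤ (K : ℝ) := Nat.le_ceil _
  have hbig : 1 ≤ a * 2 ^ K * 2 ^ (K ^ 3) * 2 ^ (K ^ 3) := by
    have : 0 < a * 2 ^ K * 2 ^ (K ^ 3) * 2 ^ (K ^ 3) := by positivity
    omega
  refine ⟨K + a * 2 ^ K * 2 ^ (K ^ 3) * 2 ^ (K ^ 3), by omega, ?_⟩
  intro V _ C _ G hn hC p q
  set n : ℝ := (Fintype.card V : ℝ) with hnn
  have hnK : (K : ℝ) ≤ n := by
    have : K ≤ Fintype.card V := by omega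
    rw [hnn]; exact_mod_cast this
  have h2a : 2 * (a : ℝ) ≤ η * δ * n := by
    have := hKR.trans hnK
    rw [div_le_iff₀ (by positivity)] at this
    linarith
  have hn0 : 0 < n := by
    by_contra h
    push Not at h
    have : η * δ * n ≤ 0 := mul_nonpos_of_nonneg_of_nonpos (by positivity) h
    linarith
  have h2a' : 2 * (a : ℝ) ≤ η * n := by
    have : η * δ * n ≤ η * n := by
      have : 0 < η * n := by positivity
      nlinarith
    linarith
  set m : ℕ := ⌊η * n / a⌋₊ with hm
  have hmle : (m : ℝ) ≤ η * n / a := Nat.floor_le (by positivity)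
  have hmgt : η * n / a < m + 1 := Nat.lt_floor_add_one _
  have h2 : 2 ≤ η * n / a := by rw [le_div_iff₀ (by linarith)]; exact h2a'
  have hmlow : η * n / a ≤ 2 * m := by linarith
  have hmpos : 0 < m := by
    have : (0 : ℝ) < m := by linarith
    exact_mod_cast this
  have ham : (a : ℝ) * m ≤ η * n := by
    rw [le_div_iff₀ (by linarith)] at hmle
    linarith
  have hmR : (0 : ℝ) < m := by exact_mod_cast hmpos
  have hmη : (m : ℝ) ≤ η * n := by nlinarith
  obtain ⟨𝒜, cA, dA, pA, lA⟩ := chop p m hmpos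
  obtain ⟨𝒟, cD, dD, pD, lD⟩ := chop q m hmpos
  have hηm : η * n ≤ 2 * a * m := by
    rw [div_le_iff₀ (by linarith)] at hmlow
    linarith
  have kA : 𝒜.card ≤ K := by
    have h := card_family 𝒜 m cA dA
    have h' : (𝒜.biUnion id).card ≤ Fintype.card V := Finset.card_le_univ _
    rw [h] at h'
    have h3 : (𝒜.card : ℝ) * m ≤ n := by rw [hnn]; exact_mod_cast h'
    have h4 : (𝒜.card : ℝ) ≤ 2 * (a : ℝ) / (η * δ) := by
      rw [le_div_iff₀ (by positivity)]
      have h5 : (𝒜.card : ℝ) * (η * δ) * m ≤ 2 * a * m := by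
        calc (𝒜.card : ℝ) * (η * δ) * m = (η * δ) * ((𝒜.card : ℝ) * m) := by ring
          _ ≤ (η * δ) * n := by gcongr
          _ ≤ η * n := by
            have : 0 < η * n := by positivity
            nlinarith
          _ ≤ _ := hηm
      exact le_of_mul_le_mul_right h5 hmR
    exact_mod_cast h4.trans hKR
  have kD : 𝒟.card ≤ K := by
    have h := card_family 𝒟 m cD dD
    have h' : (𝒟.biUnion id).card ≤ Fintype.card C := Finset.card_le_univ _
    rw [h] at h'
    have h3 : (𝒟.card : ℝ) * m ≤ n / δ := le_trans (by exact_mod_cast h') hC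
    have h4 : (𝒟.card : ℝ) ≤ 2 * (a : ℝ) / (η * δ) := by
      rw [le_div_iff₀ (by positivity)]
      have h5 : (𝒟.card : ℝ) * (η * δ) * m ≤ 2 * a * m := by
        calc (𝒟.card : ℝ) * (η * δ) * m = (η * δ) * ((𝒟.card : ℝ) * m) := by ring
          _ ≤ (η * δ) * (n / δ) := by gcongr
          _ = η * n := by field_simp
          _ ≤ _ := hηm
      exact le_of_mul_le_mul_right h5 hmR
    exact_mod_cast h4.trans hKR
  set I := (𝒜 ×ˢ 𝒜 ×ˢ 𝒟).filter (fun t => ¬ RegE e G t.1 t.2.1 t.2.2) with hI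
  by_cases hirr : (I.card : ℝ) * (m : ℝ) ^ 3 ≤ e * (n ^ 2 * (Fintype.card C : ℝ))
  · left
    refine ⟨𝒜, 𝒟, m, ⟨hmpos, hmη, cA, cD, dA, dD, ?_, ?_, by omega, by omega, hirr⟩⟩
    · exact le_trans (by exact_mod_cast lA) ham
    · exact le_trans (by exact_mod_cast lD) ham
  right
  push Not at hirr
  have hwit : ∀ t : Finset V × Finset V × Finset C, ∃ S : Finset V × Finset V × Finset C,
      t ∈ I → S.1 ⊆ t.1 ∧ S.2.1 ⊆ t.2.1 ∧ S.2.2 ⊆ t.2.2 ∧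
        e * (t.1.card : ℝ) ≤ S.1.card ∧ e * (t.2.1.card : ℝ) ≤ S.2.1.card ∧
        e * (t.2.2.card : ℝ) ≤ S.2.2.card ∧
        e ≤ |colDensity G S.1 S.2.1 S.2.2 - colDensity G t.1 t.2.1 t.2.2| := by
    intro t
    by_cases ht : t ∈ I
    · have := (Finset.mem_filter.mp ht).2
      unfold RegE at this
      push Not at this
      obtain ⟨A', hA', B', hB', D', hD', h1, h2, h3, h4⟩ := this
      exact ⟨(A', B', D'), fun _ => ⟨hA', hB', hD', h1, h2, h3, h4⟩⟩
    · exact ⟨(∅, ∅, ∅), fun h => absurd h ht⟩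
  choose W hW using hwit
  let T : Type := {t // t ∈ 𝒜 ×ˢ 𝒜 ×ˢ 𝒟}
  have hTc : Fintype.card T ≤ K ^ 3 := by
    simp only [T, Fintype.card_coe, Finset.card_product]
    calc 𝒜.card * (𝒜.card * 𝒟.card) ≤ K * (K * K) := by gcongr
      _ = K ^ 3 := by ring
  let p1 : V → (Fin a × (𝒜 → Prop)) × (T → Prop) × (T → Prop) := fun x =>
    (memLab 𝒜 p x, (fun t => x ∈ (W t.1).1), (fun t => x ∈ (W t.1).2.1))
  let q1 : C → (Fin a × (𝒟 → Prop)) × (T → Prop) := fun x =>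
    (memLab 𝒟 q x, (fun t => x ∈ (W t.1).2.2))
  obtain ⟨p', hp'⟩ := exists_fin_label p1 (K + a * 2 ^ K * 2 ^ (K ^ 3) * 2 ^ (K ^ 3)) (by
    simp only [Fintype.card_prod, Fintype.card_fin, Fintype.card_fun, Fintype.card_prop,
      Fintype.card_coe]
    have h1 : 2 ^ 𝒜.card ≤ 2 ^ K := Nat.pow_le_pow_right (by norm_num) kA
    have h2 : 2 ^ Fintype.card T ≤ 2 ^ (K ^ 3) := Nat.pow_le_pow_right (by norm_num) hTc
    calc a * 2 ^ 𝒜.card * (2 ^ Fintype.card T * 2 ^ Fintype.card T)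
        ≤ a * 2 ^ K * (2 ^ (K ^ 3) * 2 ^ (K ^ 3)) := by gcongr
      _ = a * 2 ^ K * 2 ^ (K ^ 3) * 2 ^ (K ^ 3) := by ring
      _ ≤ _ := by omega)
  obtain ⟨q', hq'⟩ := exists_fin_label q1 (K + a * 2 ^ K * 2 ^ (K ^ 3) * 2 ^ (K ^ 3)) (by
    simp only [Fintype.card_prod, Fintype.card_fin, Fintype.card_fun, Fintype.card_prop,
      Fintype.card_coe]
    have h1 : 2 ^ 𝒟.card ≤ 2 ^ K := Nat.pow_le_pow_right (by norm_num) kD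
    have h2 : 2 ^ Fintype.card T ≤ 2 ^ (K ^ 3) := Nat.pow_le_pow_right (by norm_num) hTc
    calc a * 2 ^ 𝒟.card * 2 ^ Fintype.card T
        ≤ a * 2 ^ K * 2 ^ (K ^ 3) := by gcongr
      _ ≤ a * 2 ^ K * 2 ^ (K ^ 3) * 2 ^ (K ^ 3) := Nat.le_mul_of_pos_right _ (by positivity)
      _ ≤ _ := by omega)
  refine ⟨p', q', ?_⟩
  have hmemI : ∀ t ∈ I, t.1 ∈ 𝒜 ∧ t.2.1 ∈ 𝒜 ∧ t.2.2 ∈ 𝒟 := by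
    intro t ht
    have := (Finset.mem_filter.mp ht).1
    simpa [Finset.mem_product] using this
  have hcardT : ∀ t ∈ I, (((t.1 ×ˢ t.2.1 ×ˢ t.2.2 : Finset (V × V × C)).card : ℕ) : ℝ)
      = (m : ℝ) ^ 3 := by
    intro t ht
    obtain ⟨h1, h2, h3⟩ := hmemI t ht
    rw [Finset.card_product, Finset.card_product, cA _ h1, cA _ h2, cD _ h3]
    push_cast; ring
  have hE0 : energy (adjF G) (lab p q) ≤ energy (adjF G) (lab (memLab 𝒜 p) (memLab 𝒟 q)) := by
    apply energy_mono
    intro x y hxy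
    simp only [lab, memLab, Prod.mk.injEq] at hxy ⊢
    exact ⟨hxy.1.1, hxy.2.1.1, hxy.2.2.1⟩
  have hE1 := energy_incr (adjF G) (lab (memLab 𝒜 p) (memLab 𝒟 q)) (lab p' q') (by
      intro x y hxy
      simp only [lab, Prod.mk.injEq] at hxy ⊢
      exact ⟨congrArg Prod.fst (hp' _ _ hxy.1), congrArg Prod.fst (hp' _ _ hxy.2.1),
        congrArg Prod.fst (hq' _ _ hxy.2.2)⟩) I
    (fun t => (W t).1 ×ˢ (W t).2.1 ×ˢ (W t).2.2) (fun t => t.1 ×ˢ t.2.1 ×ˢ t.2.2) e he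
    (by
      intro t ht
      obtain ⟨h1, h2, h3, _⟩ := hW t ht
      exact Finset.product_subset_product h1 (Finset.product_subset_product h2 h3))
    (by
      intro t ht s hs hts
      obtain ⟨h1, h2, h3⟩ := hmemI t ht
      obtain ⟨g1, g2, g3⟩ := hmemI s hs
      rw [Finset.disjoint_left]
      rintro ⟨x, y, c⟩ hx hy
      simp only [Finset.mem_product] at hx hy
      apply hts
      refine Prod.ext ?_ (Prod.ext ?_ ?_)
      · by_contra hne
        exact Finset.disjoint_left.mp (dA _ h1 _ g1 hne) hx.1 hy.1
      · by_contra hne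
        exact Finset.disjoint_left.mp (dA _ h2 _ g2 hne) hx.2.1 hy.2.1
      · by_contra hne
        exact Finset.disjoint_left.mp (dD _ h3 _ g3 hne) hx.2.2 hy.2.2)
    (by
      rintro t ht ⟨x, y, c⟩ hx ⟨x', y', c'⟩
      obtain ⟨h1, h2, h3⟩ := hmemI t ht
      simp only [Finset.mem_product] at hx ⊢
      simp only [lab, Prod.mk.injEq]
      rw [memLab_fib 𝒜 p dA pA _ h1 x x' hx.1, memLab_fib 𝒜 p dA pA _ h2 y y' hx.2.1,
        memLab_fib 𝒟 q dD pD _ h3 c c' hx.2.2])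
    (by
      rintro t ht ⟨x, y, c⟩ ⟨x', y', c'⟩ hxy hx
      have ht' := (Finset.mem_filter.mp ht).1
      simp only [Finset.mem_product] at hx ⊢
      simp only [lab, Prod.mk.injEq] at hxy
      have e1 := congrFun (congrArg (fun z => z.2.1) (hp' _ _ hxy.1)) ⟨t, ht'⟩
      have e2 := congrFun (congrArg (fun z => z.2.2) (hp' _ _ hxy.2.1)) ⟨t, ht'⟩
      have e3 := congrFun (congrArg (fun z => z.2) (hq' _ _ hxy.2.2)) ⟨t, ht'⟩
      exact ⟨e1.mp hx.1, e2.mp hx.2.1, e3.mp hx.2.2⟩)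
    (by
      intro t ht
      obtain ⟨_, _, _, h1, h2, h3, _⟩ := hW t ht
      simp only [Finset.card_product]
      push_cast
      calc e ^ 3 * ((t.1.card : ℝ) * ((t.2.1.card : ℝ) * (t.2.2.card : ℝ)))
          = (e * t.1.card) * ((e * t.2.1.card) * (e * t.2.2.card)) := by ring
        _ ≤ _ := by gcongr)
    (by
      intro t ht
      obtain ⟨_, _, _, _, _, _, h⟩ := hW t ht
      rw [setDens_adjF, setDens_adjF]
      exact h)
  rw [Finset.sum_congr rfl hcardT, Finset.sum_const, nsmul_eq_mul] at hE1
  have : e ^ 6 * (n ^ 2 * (Fintype.card C : ℝ)) ≤ e ^ 5 * ((I.card : ℝ) * (m : ℝ) ^ 3) := by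
    calc e ^ 6 * (n ^ 2 * (Fintype.card C : ℝ)) = e ^ 5 * (e * (n ^ 2 * (Fintype.card C : ℝ))) := by
          ring
      _ ≤ _ := by gcongr
  linarith

lemma GoodChop.mono {V C : Type} [Fintype V] [Fintype C] {e η : ℝ} {G : C → SimpleGraph V}
    {K K' : ℕ} (hK : K ≤ K')
    {𝒜 : Finset (Finset V)} {𝒟 : Finset (Finset C)} {m : ℕ} (h : GoodChop e η G K 𝒜 𝒟 m) :
    GoodChop e η G K' 𝒜 𝒟 m :=
  ⟨h.mpos, h.mle, h.cA, h.cD, h.dA, h.dD, h.lA, h.lD, h.kA.trans hK, h.kD.trans hK, h.irr⟩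

lemma iterate_step (e η δ : ℝ) (he : 0 < e) (hη : 0 < η) (hδ : 0 < δ) (hδ1 : δ ≤ 1) (t : ℕ) :
    ∀ a : ℕ, 1 ≤ a → ∃ K : ℕ, 1 ≤ K ∧
      ∀ (V : Type) [Fintype V] (C : Type) [Fintype C] (G : C → SimpleGraph V),
      K ≤ Fintype.card V → δ * (Fintype.card V : ℝ) ≤ Fintype.card C →
      (Fintype.card C : ℝ) ≤ (Fintype.card V : ℝ) / δ →
      ∀ (p : V → Fin a) (q : C → Fin a),
      (1 - t * e ^ 6) * ((Fintype.card V : ℝ) ^ 2 * (Fintype.card C : ℝ)) ≤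
        energy (adjF G) (lab p q) →
      ∃ 𝒜 𝒟 m, GoodChop e η G K 𝒜 𝒟 m := by
  induction t with
  | zero =>
    intro a ha
    obtain ⟨a', ha', h⟩ := step e η δ he hη hδ hδ1 a ha
    refine ⟨a', ha', ?_⟩
    intro V _ C _ G hn hC1 hC2 p q hE
    rcases h V C G hn hC2 p q with h | ⟨p', q', h⟩
    · exact h
    exfalso
    have h1 := energy_le (adjF G) (lab p' q') (by intro ω; unfold adjF; split_ifs <;> norm_num)
      (by intro ω; unfold adjF; split_ifs <;> norm_num)
    simp only [Fintype.card_prod] at h1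
    push_cast at h1
    have hn0 : (0 : ℝ) < Fintype.card V := by
      have : 0 < Fintype.card V := by omega
      exact_mod_cast this
    have hc0 : (0 : ℝ) < Fintype.card C := lt_of_lt_of_le (by positivity) hC1
    have : 0 < e ^ 6 * ((Fintype.card V : ℝ) ^ 2 * (Fintype.card C : ℝ)) := by positivity
    simp only [Nat.cast_zero, zero_mul, sub_zero, one_mul] at hE
    nlinarith
  | succ t ih =>
    intro a ha
    obtain ⟨a', ha', h⟩ := step e η δ he hη hδ hδ1 a ha
    obtain ⟨K, hK, h2⟩ := ih a' ha'
    refine ⟨max a' K, by omega, ?_⟩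
    intro V _ C _ G hn hC1 hC2 p q hE
    rcases h V C G (by omega) hC2 p q with ⟨𝒜, 𝒟, m, h⟩ | ⟨p', q', h⟩
    · exact ⟨𝒜, 𝒟, m, h.mono (le_max_left _ _)⟩
    obtain ⟨𝒜, 𝒟, m, h⟩ := h2 V C G (by omega) hC1 hC2 p' q' (by
      push_cast at hE
      linarith)
    exact ⟨𝒜, 𝒟, m, h.mono (le_max_right _ _)⟩

lemma regularity (e η δ : ℝ) (he : 0 < e) (hη : 0 < η) (hδ : 0 < δ) (hδ1 : δ ≤ 1) :
    ∃ K : ℕ, 1 ≤ K ∧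
      ∀ (V : Type) [Fintype V] (C : Type) [Fintype C] (G : C → SimpleGraph V),
      K ≤ Fintype.card V → δ * (Fintype.card V : ℝ) ≤ Fintype.card C →
      (Fintype.card C : ℝ) ≤ (Fintype.card V : ℝ) / δ →
      ∃ 𝒜 𝒟 m, GoodChop e η G K 𝒜 𝒟 m := by
  obtain ⟨K, hK, h⟩ := iterate_step e η δ he hη hδ hδ1 ⌈1 / e ^ 6⌉₊ 1 le_rfl
  refine ⟨K, hK, ?_⟩
  intro V _ C _ G hn hC1 hC2
  refine h V C G hn hC1 hC2 (fun _ => 0) (fun _ => 0) (le_trans ?_ (energy_nonneg _ _))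
  have h1 : 1 / e ^ 6 ≤ (⌈1 / e ^ 6⌉₊ : ℝ) := Nat.le_ceil _
  rw [div_le_iff₀ (by positivity)] at h1
  exact mul_nonpos_of_nonpos_of_nonneg (by linarith) (by positivity)

/-! ### Cleaning lemmas -/

set_option maxHeartbeats 2000000 in
lemma prep {X : Type} [Fintype X] (𝒜 : Finset (Finset X)) (m : ℕ) (hm : 0 < m)
    (cA : ∀ A ∈ 𝒜, A.card = m) (dA : ∀ A ∈ 𝒜, ∀ B ∈ 𝒜, A ≠ B → Disjoint A B)
    (Bad : Finset X) (κ ℓ : ℝ) (hκ : 0 < κ) (hκ1 : κ ≤ 1)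
    (lA : ((univ \ 𝒜.biUnion id).card : ℝ) ≤ ℓ)
    (hB : (Bad.card : ℝ) ≤ κ ^ 2 * (Fintype.card X : ℝ)) :
    ∃ (L : ℕ) (Vp idx : ℕ → Finset X), L ≤ 𝒜.card ∧ (∀ i j, i ≠ j → Disjoint (Vp i) (Vp j)) ∧
      ((Finset.range (L + 1)).biUnion Vp = univ) ∧
      ((Vp 0).card : ℝ) ≤ ℓ + 2 * κ * (Fintype.card X : ℝ) ∧
      ((Fintype.card X : ℝ) ≤ (Vp 0).card + L * m) ∧
      (∀ i, 1 ≤ i → i ≤ L → idx i ∈ 𝒜 ∧ Vp i ⊆ idx i ∧ (Vp i).card = m - ⌊κ * m⌋₊ ∧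
        Disjoint (Vp i) Bad) ∧
      (∀ i j, 1 ≤ i → i ≤ L → 1 ≤ j → j ≤ L → idx i = idx j → i = j) := by
  have hmR : (0 : ℝ) < m := by exact_mod_cast hm
  set S := 𝒜.filter (fun A => ((A ∩ Bad).card : ℝ) ≤ κ * m) with hS
  set f : ℕ := ⌊κ * m⌋₊ with hf
  have hfle : (f : ℝ) ≤ κ * m := Nat.floor_le (by positivity)
  have hfm : f ≤ m := by
    have : (f : ℝ) ≤ m := hfle.trans (by nlinarith)
    exact_mod_cast this
  have hex : ∀ A : Finset X, ∃ t : Finset X, A ∈ S → t ⊆ A \ Bad ∧ t.card = m - f := by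
    intro A
    by_cases hA : A ∈ S
    · obtain ⟨h1, h2⟩ := Finset.mem_filter.mp hA
      have h3 : (A ∩ Bad).card ≤ f := Nat.le_floor h2
      have h4 := Finset.card_sdiff_add_card_inter A Bad
      rw [cA A h1] at h4
      obtain ⟨t, ht, htc⟩ := Finset.exists_subset_card_eq (s := A \ Bad) (n := m - f) (by omega)
      exact ⟨t, fun _ => ⟨ht, htc⟩⟩
    · exact ⟨∅, fun h => absurd h hA⟩
  choose t ht using hex
  have htA : ∀ A ∈ S, t A ⊆ A := fun A hA => (ht A hA).1.trans Finset.sdiff_subset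
  have hSA : ∀ A ∈ S, A ∈ 𝒜 := fun A hA => (Finset.mem_filter.mp hA).1
  let φ := S.equivFin
  let idx : ℕ → Finset X := fun i => if h : i - 1 < S.card then (φ.symm ⟨i - 1, h⟩ : Finset X) else ∅
  let Vp : ℕ → Finset X := fun i => if i = 0 then univ \ S.biUnion t else
    if i - 1 < S.card then t (idx i) else ∅
  have hidx : ∀ i, i - 1 < S.card → idx i ∈ S := by
    intro i hi
    simp only [idx, hi, dif_pos]
    exact (φ.symm ⟨i - 1, hi⟩).2
  have hinj : ∀ i j, 1 ≤ i → i ≤ S.card → 1 ≤ j → j ≤ S.card → idx i = idx j → i = j := by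
    intro i j h1 h2 h3 h4 h
    have hi : i - 1 < S.card := by omega
    have hj : j - 1 < S.card := by omega
    simp only [idx, hi, hj, dif_pos] at h
    have := φ.symm.injective (Subtype.ext h)
    simp only [Fin.mk.injEq] at this
    omega
  have hVpos : ∀ i, 1 ≤ i → i ≤ S.card → Vp i = t (idx i) := by
    intro i h1 h2
    have h3 : i ≠ 0 := by omega
    have h4 : i - 1 < S.card := by omega
    simp [Vp, h3, h4]
  have hVbig : ∀ i, S.card < i → Vp i = ∅ := by
    intro i h1
    have h3 : i ≠ 0 := by omega
    have h4 : ¬ (i - 1 < S.card) := by omega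
    simp only [Vp, h3, h4, if_false]
  have hV0 : Vp 0 = univ \ S.biUnion t := by simp [Vp]
  have hdisj0 : ∀ i, 1 ≤ i → Disjoint (Vp 0) (Vp i) := by
    intro i hi
    by_cases h : i ≤ S.card
    · rw [hV0, hVpos i hi h]
      rw [Finset.disjoint_left]
      intro x hx hx'
      exact (Finset.mem_sdiff.mp hx).2
        (Finset.mem_biUnion.mpr ⟨idx i, hidx i (by omega), hx'⟩)
    · rw [hVbig i (by omega)]; exact Finset.disjoint_empty_right _
  have hdisj : ∀ i j, i ≠ j → Disjoint (Vp i) (Vp j) := by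
    intro i j hij
    rcases Nat.eq_zero_or_pos i with rfl | hi
    · exact hdisj0 j (by omega)
    rcases Nat.eq_zero_or_pos j with rfl | hj
    · exact (hdisj0 i hi).symm
    by_cases h : i ≤ S.card
    · by_cases h' : j ≤ S.card
      · rw [hVpos i hi h, hVpos j hj h']
        have hi' := hidx i (by omega)
        have hj' := hidx j (by omega)
        refine (dA _ (hSA _ hi') _ (hSA _ hj') ?_).mono (htA _ hi') (htA _ hj')
        intro he
        exact hij (hinj i j hi h hj h' he)
      · rw [hVbig j (by omega)]; exact Finset.disjoint_empty_right _
    · rw [hVbig i (by omega)]; exact Finset.disjoint_empty_left _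
  have hunion : (Finset.range (S.card + 1)).biUnion Vp = univ := by
    rw [Finset.eq_univ_iff_forall]
    intro x
    rw [Finset.mem_biUnion]
    by_cases hx : x ∈ S.biUnion t
    · obtain ⟨A, hA, hxA⟩ := Finset.mem_biUnion.mp hx
      set k := φ ⟨A, hA⟩ with hk
      refine ⟨k.1 + 1, Finset.mem_range.mpr (by omega), ?_⟩
      rw [hVpos (k.1 + 1) (by omega) (by omega)]
      have : idx (k.1 + 1) = A := by
        simp only [idx, Nat.add_sub_cancel, k.2, dif_pos]
        simp [hk]
      rw [this]; exact hxA
    · exact ⟨0, by simp, by rw [hV0]; simpa using hx⟩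
  have hbadcount : ((𝒜 \ S).card : ℝ) * m ≤ κ * (Fintype.card X : ℝ) := by
    have h1 : ∑ A ∈ 𝒜 \ S, ((A ∩ Bad).card : ℝ) ≤ Bad.card := by
      have h2 : ((𝒜 \ S).biUnion (fun A => A ∩ Bad)).card ≤ Bad.card := by
        apply Finset.card_le_card
        intro x hx
        obtain ⟨A, _, hx⟩ := Finset.mem_biUnion.mp hx
        exact (Finset.mem_inter.mp hx).2
      rw [Finset.card_biUnion] at h2
      · exact_mod_cast h2
      · intro A hA B hB hne
        exact (dA A (Finset.mem_sdiff.mp hA).1 B (Finset.mem_sdiff.mp hB).1 hne).mono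
          Finset.inter_subset_left Finset.inter_subset_left
    have h2 : ∑ A ∈ 𝒜 \ S, (κ * m) ≤ ∑ A ∈ 𝒜 \ S, ((A ∩ Bad).card : ℝ) := by
      refine Finset.sum_le_sum fun A hA => ?_
      obtain ⟨h3, h4⟩ := Finset.mem_sdiff.mp hA
      by_contra h5
      push Not at h5
      exact h4 (Finset.mem_filter.mpr ⟨h3, h5.le⟩)
    rw [Finset.sum_const, nsmul_eq_mul] at h2
    have h3 : κ * (((𝒜 \ S).card : ℝ) * m) ≤ κ * (κ * (Fintype.card X : ℝ)) := by
      calc κ * (((𝒜 \ S).card : ℝ) * m) = ((𝒜 \ S).card : ℝ) * (κ * m) := by ring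
        _ ≤ κ ^ 2 * (Fintype.card X : ℝ) := by linarith
        _ = _ := by ring
    exact le_of_mul_le_mul_left h3 hκ
  have hcV0 : ((Vp 0).card : ℝ) ≤ ℓ + 2 * κ * (Fintype.card X : ℝ) := by
    have hsub : Vp 0 ⊆ (univ \ 𝒜.biUnion id) ∪ ((𝒜 \ S).biUnion id ∪
        S.biUnion (fun A => A \ t A)) := by
      intro x hx
      rw [hV0] at hx
      have hx2 := (Finset.mem_sdiff.mp hx).2
      by_cases h : x ∈ 𝒜.biUnion id
      · obtain ⟨A, hA, hxA⟩ := Finset.mem_biUnion.mp h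
        apply Finset.mem_union_right
        by_cases hAS : A ∈ S
        · apply Finset.mem_union_right
          refine Finset.mem_biUnion.mpr ⟨A, hAS, Finset.mem_sdiff.mpr ⟨hxA, fun h' => hx2 ?_⟩⟩
          exact Finset.mem_biUnion.mpr ⟨A, hAS, h'⟩
        · apply Finset.mem_union_left
          exact Finset.mem_biUnion.mpr ⟨A, Finset.mem_sdiff.mpr ⟨hA, hAS⟩, hxA⟩
      · exact Finset.mem_union_left _ (by simpa using h)
    have h1 := Finset.card_le_card hsub
    have h2 := (h1.trans (Finset.card_union_le _ _)).trans
      (Nat.add_le_add_left (Finset.card_union_le _ _) _)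
    have h3 : ((𝒜 \ S).biUnion id).card ≤ (𝒜 \ S).card * m :=
      Finset.card_biUnion_le_card_mul _ _ _
        (fun A hA => (cA A (Finset.mem_sdiff.mp hA).1).le)
    have h4 : (S.biUnion (fun A => A \ t A)).card ≤ S.card * f := by
      refine Finset.card_biUnion_le_card_mul _ _ _ (fun A hA => ?_)
      rw [Finset.card_sdiff_of_subset (htA A hA), cA A (hSA A hA), (ht A hA).2]
      omega
    have h5 : S.card * m ≤ Fintype.card X := by
      rw [← card_family S m (fun A hA => cA A (hSA A hA))
        (fun A hA B hB => dA A (hSA A hA) B (hSA B hB))]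
      exact Finset.card_le_univ _
    have h2R : ((Vp 0).card : ℝ) ≤ ((univ \ 𝒜.biUnion id).card : ℝ) +
      (((𝒜 \ S).biUnion id).card + (S.biUnion (fun A => A \ t A)).card) := by exact_mod_cast h2
    have h3R : (((𝒜 \ S).biUnion id).card : ℝ) ≤ (𝒜 \ S).card * m := by exact_mod_cast h3
    have h4R : ((S.biUnion (fun A => A \ t A)).card : ℝ) ≤ S.card * f := by exact_mod_cast h4
    have h5R : (S.card : ℝ) * m ≤ Fintype.card X := by exact_mod_cast h5
    have h6 : (S.card : ℝ) * f ≤ κ * (Fintype.card X : ℝ) := by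
      calc (S.card : ℝ) * f ≤ S.card * (κ * m) := by gcongr
        _ = κ * (S.card * m) := by ring
        _ ≤ _ := by gcongr
    linarith
  refine ⟨S.card, Vp, idx, Finset.card_le_card (Finset.filter_subset _ _), hdisj, hunion, hcV0,
    ?_, ?_, hinj⟩
  · have h1 : Fintype.card X ≤ (Vp 0).card + S.card * m := by
      rw [← Finset.card_univ, ← hunion]
      refine Finset.card_biUnion_le.trans ?_
      rw [Finset.sum_range_succ']
      have : ∑ i ∈ Finset.range S.card, (Vp (i + 1)).card ≤ ∑ i ∈ Finset.range S.card, m := by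
        refine Finset.sum_le_sum fun i hi => ?_
        have hi' := Finset.mem_range.mp hi
        rw [hVpos (i + 1) (by omega) (by omega), (ht _ (hidx (i + 1) (by omega))).2]
        omega
      rw [Finset.sum_const, Finset.card_range, smul_eq_mul] at this
      omega
    exact_mod_cast h1
  · intro i h1 h2
    have hi := hidx i (by omega)
    rw [hVpos i h1 h2]
    refine ⟨hSA _ hi, htA _ hi, (ht _ hi).2, ?_⟩
    rw [Finset.disjoint_left]
    intro x hx
    exact (Finset.mem_sdiff.mp ((ht _ hi).1 hx)).2

lemma excess {X : Type} (A : Finset X) (w : X → ℝ) (m thr e : ℝ) (hthr : 0 ≤ thr) (he : 0 ≤ e)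
    (hA : (A.card : ℝ) = m) (hw : ∀ x ∈ A, w x ≤ m ^ 2)
    (h : ∀ U ⊆ A, U.Nonempty → e * m ≤ (U.card : ℝ) → ∑ x ∈ U, w x < thr * U.card) :
    ∑ x ∈ A, max 0 (w x - thr) ≤ e * m ^ 3 := by
  have hm : 0 ≤ m := by rw [← hA]; positivity
  set U := A.filter (fun x => thr < w x) with hU
  have h1 : ∑ x ∈ A, max 0 (w x - thr) = ∑ x ∈ U, max 0 (w x - thr) := by
    rw [hU, Finset.sum_filter]
    refine Finset.sum_congr rfl fun x _ => ?_
    split_ifs with hx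
    · rfl
    · exact max_eq_left (by linarith)
  have h2 : ∑ x ∈ U, max 0 (w x - thr) ≤ U.card * m ^ 2 := by
    rw [← nsmul_eq_mul]
    refine Finset.sum_le_card_nsmul _ _ _ fun x hx => ?_
    have := hw x (Finset.mem_filter.mp hx).1
    exact max_le (by positivity) (by linarith)
  have h3 : (U.card : ℝ) ≤ e * m := by
    by_contra hlt
    push Not at hlt
    have hpos : (0 : ℝ) < U.card := lt_of_le_of_lt (by positivity) hlt
    have hne : U.Nonempty := Finset.card_pos.mp (by exact_mod_cast hpos)
    have h4 := h U (Finset.filter_subset _ _) hne hlt.le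
    have h5 : (U.card : ℝ) * thr ≤ ∑ x ∈ U, w x := by
      rw [← nsmul_eq_mul]
      exact Finset.card_nsmul_le_sum _ _ _ fun x hx => (Finset.mem_filter.mp hx).2.le
    linarith
  rw [h1]
  calc _ ≤ U.card * m ^ 2 := h2
    _ ≤ e * m * m ^ 2 := by gcongr
    _ = _ := by ring

lemma badSet {X τ : Type} [Fintype X] (T : Finset τ) (cl : τ → Finset X) (w : X → τ → ℝ)
    (m thr e θ bound : ℝ) (hthr : 0 ≤ thr) (he : 0 ≤ e) (hm : 0 ≤ m) (R : τ → Prop)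
    (hc : ∀ t ∈ T, ((cl t).card : ℝ) = m) (hw : ∀ t ∈ T, ∀ x ∈ cl t, w x t ≤ m ^ 2)
    (hreg : ∀ t ∈ T, R t → ∀ U ⊆ cl t, U.Nonempty → e * m ≤ (U.card : ℝ) →
      ∑ x ∈ U, w x t < thr * U.card)
    (hb : e * T.card * m ^ 3 + (T.filter (fun t => ¬ R t)).card * m ^ 3 ≤ bound) :
    ∃ Bad : Finset X, (Bad.card : ℝ) * θ ≤ bound ∧ ∀ x ∉ Bad,
      ∑ t ∈ T.filter (fun t => x ∈ cl t), w x t ≤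
        θ + thr * (T.filter (fun t => x ∈ cl t)).card := by
  set ex : X → ℝ := fun x => ∑ t ∈ T.filter (fun t => x ∈ cl t), max 0 (w x t - thr) with hex
  refine ⟨univ.filter (fun x => θ < ex x), ?_, ?_⟩
  · have hex0 : ∀ x, 0 ≤ ex x := fun x => Finset.sum_nonneg fun _ _ => le_max_left _ _
    have h1 : ((univ.filter (fun x => θ < ex x)).card : ℝ) * θ ≤ ∑ x, ex x := by
      calc _ ≤ ∑ x ∈ univ.filter (fun x => θ < ex x), ex x := by
            rw [← nsmul_eq_mul]
            exact Finset.card_nsmul_le_sum _ _ _ fun x hx => (Finset.mem_filter.mp hx).2.le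
        _ ≤ _ := Finset.sum_le_sum_of_subset_of_nonneg (Finset.subset_univ _)
            (fun x _ _ => hex0 x)
    have h2 : ∑ x, ex x = ∑ t ∈ T, ∑ x ∈ cl t, max 0 (w x t - thr) := by
      simp only [hex, Finset.sum_filter]
      rw [Finset.sum_comm]
      refine Finset.sum_congr rfl fun t _ => ?_
      rw [← Finset.sum_filter]
      congr 1
      ext x; simp
    have h3 : ∀ t ∈ T, ∑ x ∈ cl t, max 0 (w x t - thr) ≤
        e * m ^ 3 + if ¬ R t then m ^ 3 else 0 := by
      intro t ht
      by_cases hR : R t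
      · simp only [hR, not_true, if_false, add_zero]
        exact excess (cl t) (fun x => w x t) m thr e hthr he (hc t ht) (hw t ht) (hreg t ht hR)
      · simp only [hR, not_false_iff, if_true]
        have h4 : ∑ x ∈ cl t, max 0 (w x t - thr) ≤ (cl t).card * m ^ 2 := by
          rw [← nsmul_eq_mul]
          refine Finset.sum_le_card_nsmul _ _ _ fun x hx => ?_
          have := hw t ht x hx
          exact max_le (by positivity) (by linarith)
        rw [hc t ht] at h4
        have : 0 ≤ e * m ^ 3 := by positivity
        nlinarith
    have h5 := Finset.sum_le_sum h3
    rw [Finset.sum_add_distrib, Finset.sum_const, ← Finset.sum_filter, Finset.sum_const,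
      nsmul_eq_mul, nsmul_eq_mul] at h5
    linarith
  · intro x hx
    have hx' : ex x ≤ θ := by
      by_contra h
      push Not at h
      exact hx (by simpa using h)
    have : ∑ t ∈ T.filter (fun t => x ∈ cl t), w x t ≤
        ∑ t ∈ T.filter (fun t => x ∈ cl t), (max 0 (w x t - thr) + thr) :=
      Finset.sum_le_sum fun t _ => by linarith [le_max_right 0 (w x t - thr)]
    rw [Finset.sum_add_distrib, Finset.sum_const, nsmul_eq_mul] at this
    simp only [hex] at hx'
    linarith

/-! ### Counting lemmas for graph collections -/

lemma pairCount_symm {V : Type} (G : SimpleGraph V) (A B : Finset V) :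
    pairCount G A B = pairCount G B A := by
  unfold pairCount
  refine Finset.card_bij' (fun p _ => p.swap) (fun p _ => p.swap) ?_ ?_ ?_ ?_
  · rintro ⟨x, y⟩ h
    simp only [Finset.mem_filter, Finset.mem_product, Prod.swap] at h ⊢
    exact ⟨⟨h.1.2, h.1.1⟩, h.2.symm⟩
  · rintro ⟨x, y⟩ h
    simp only [Finset.mem_filter, Finset.mem_product, Prod.swap] at h ⊢
    exact ⟨⟨h.1.2, h.1.1⟩, h.2.symm⟩
  · intro p _; simp
  · intro p _; simp

lemma colDensity_symm {V C : Type} (G : C → SimpleGraph V) (A B : Finset V) (D : Finset C) :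
    colDensity G A B D = colDensity G B A D := by
  unfold colDensity
  simp_rw [fun c => pairCount_symm (G c) A B]
  congr 1
  ring

lemma RegE_symm {V C : Type} {e : ℝ} {G : C → SimpleGraph V} {A B : Finset V} {D : Finset C}
    (h : RegE e G A B D) : RegE e G B A D := by
  intro A' hA B' hB D' hD h1 h2 h3
  rw [colDensity_symm G A', colDensity_symm G B]
  exact h B' hB A' hA D' hD h2 h1 h3

/-- The triples whose edges are to be removed. -/
def BadT {V C : Type} (e d : ℝ) (G : C → SimpleGraph V)
    (t : Finset V × Finset V × Finset C) : Prop :=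
  t.1 = t.2.1 ∨ ¬ RegE e G t.1 t.2.1 t.2.2 ∨ colDensity G t.1 t.2.1 t.2.2 < d + e

lemma BadT_symm {V C : Type} {e d : ℝ} {G : C → SimpleGraph V} {A B : Finset V} {D : Finset C}
    (h : BadT e d G (A, B, D)) : BadT e d G (B, A, D) := by
  rcases h with h | h | h
  · exact Or.inl h.symm
  · exact Or.inr (Or.inl fun h' => h (RegE_symm h'))
  · refine Or.inr (Or.inr ?_)
    simp only at h ⊢
    rwa [colDensity_symm]

lemma sum_lt_of_density {V C : Type} (G : C → SimpleGraph V) (A B : Finset V) (D : Finset C)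
    (x : ℝ) (hA : 0 < A.card) (hB : 0 < B.card) (hD : 0 < D.card) (h : colDensity G A B D < x) :
    ∑ c ∈ D, (pairCount (G c) A B : ℝ) < x * ((D.card : ℝ) * A.card * B.card) := by
  unfold colDensity at h
  have hA' : (0 : ℝ) < A.card := by exact_mod_cast hA
  have hB' : (0 : ℝ) < B.card := by exact_mod_cast hB
  have hD' : (0 : ℝ) < D.card := by exact_mod_cast hD
  rwa [div_lt_iff₀ (by positivity)] at h

lemma sum_degIn {V C : Type} (G : C → SimpleGraph V) (A B : Finset V) (D : Finset C) :
    ∑ v ∈ A, ∑ c ∈ D, (degIn (G c) v B : ℝ) = ∑ c ∈ D, (pairCount (G c) A B : ℝ) := by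
  rw [Finset.sum_comm]
  refine Finset.sum_congr rfl fun c _ => ?_
  unfold degIn pairCount
  simp_rw [Finset.card_filter, Finset.sum_product]
  push_cast
  rfl

/-- Remove from a collection the edges prescribed by a symmetric relation. -/
def cutG {V C : Type} (G : C → SimpleGraph V) (Q : C → V → V → Prop)
    (hQ : ∀ c x y, Q c x y → Q c y x) (c : C) : SimpleGraph V where
  Adj x y := (G c).Adj x y ∧ ¬ Q c x y
  symm := ⟨fun x y h => ⟨h.1.symm, fun h' => h.2 (hQ c y x h')⟩⟩
  loopless := ⟨fun x h => (G c).loopless.irrefl x h.1⟩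

lemma loss_vertex {V C : Type} [Fintype V] [Fintype C] (G : C → SimpleGraph V)
    (Q : C → V → V → Prop) (hQ : ∀ c x y, Q c x y → Q c y x)
    (T : Finset (Finset V × Finset V × Finset C)) (v : V)
    (hT : ∀ c y, Q c v y → ∃ t ∈ T, v ∈ t.1 ∧ y ∈ t.2.1 ∧ c ∈ t.2.2) :
    ∑ c, (degOf (G c) v : ℝ) ≤ ∑ c, (degOf (cutG G Q hQ c) v : ℝ) +
      ∑ t ∈ T.filter (fun t => v ∈ t.1), ∑ c ∈ t.2.2, (degIn (G c) v t.2.1 : ℝ) := by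
  have h1 : ∀ c, degOf (G c) v ≤ degOf (cutG G Q hQ c) v +
      ∑ t ∈ T.filter (fun t => v ∈ t.1), if c ∈ t.2.2 then degIn (G c) v t.2.1 else 0 := by
    intro c
    rw [← Finset.sum_filter]
    have hsub : (univ.filter (fun w => (G c).Adj v w)) ⊆
        (univ.filter (fun w => (cutG G Q hQ c).Adj v w)) ∪
        ((T.filter (fun t => v ∈ t.1)).filter (fun t => c ∈ t.2.2)).biUnion
          (fun t => t.2.1.filter (fun w => (G c).Adj v w)) := by
      intro y hy
      have hy' := (Finset.mem_filter.mp hy).2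
      by_cases hq : Q c v y
      · obtain ⟨t, ht, h1, h2, h3⟩ := hT c y hq
        refine Finset.mem_union_right _ (Finset.mem_biUnion.mpr ⟨t, ?_, ?_⟩)
        · exact Finset.mem_filter.mpr ⟨Finset.mem_filter.mpr ⟨ht, h1⟩, h3⟩
        · exact Finset.mem_filter.mpr ⟨h2, hy'⟩
      · exact Finset.mem_union_left _
          (Finset.mem_filter.mpr ⟨Finset.mem_univ _, hy', hq⟩)
    refine (Finset.card_le_card hsub).trans ((Finset.card_union_le _ _).trans ?_)
    exact Nat.add_le_add_left Finset.card_biUnion_le _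
  have h2 := Finset.sum_le_sum (fun c (_ : c ∈ (univ : Finset C)) => h1 c)
  rw [Finset.sum_add_distrib, Finset.sum_comm (s := (univ : Finset C))] at h2
  have h3 : ∀ t : Finset V × Finset V × Finset C,
      ∑ c, (if c ∈ t.2.2 then degIn (G c) v t.2.1 else 0) =
      ∑ c ∈ t.2.2, degIn (G c) v t.2.1 := by
    intro t
    rw [← Finset.sum_filter]
    congr 1
    ext; simp
  simp_rw [h3] at h2
  exact_mod_cast h2

lemma loss_colour {V C : Type} [Fintype V] (G : C → SimpleGraph V)
    (Q : C → V → V → Prop) (hQ : ∀ c x y, Q c x y → Q c y x)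
    (T : Finset (Finset V × Finset V × Finset C)) (c : C)
    (hT : ∀ x y, Q c x y → ∃ t ∈ T, x ∈ t.1 ∧ y ∈ t.2.1 ∧ c ∈ t.2.2) :
    (edgeCnt (G c) : ℝ) ≤ (edgeCnt (cutG G Q hQ c) : ℝ) +
      ∑ t ∈ T.filter (fun t => c ∈ t.2.2), (pairCount (G c) t.1 t.2.1 : ℝ) := by
  have h1 : edgeCnt (G c) ≤ edgeCnt (cutG G Q hQ c) +
      ∑ t ∈ T.filter (fun t => c ∈ t.2.2), pairCount (G c) t.1 t.2.1 := by
    have hsub : (univ.filter (fun e => e ∈ (G c).edgeSet)) ⊆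
        (univ.filter (fun e => e ∈ (cutG G Q hQ c).edgeSet)) ∪
        (T.filter (fun t => c ∈ t.2.2)).biUnion
          (fun t => ((t.1 ×ˢ t.2.1).filter (fun p => (G c).Adj p.1 p.2)).image
            (fun p => s(p.1, p.2))) := by
      intro e he
      have he' := (Finset.mem_filter.mp he).2
      induction e using Sym2.ind with
      | _ x y =>
      rw [SimpleGraph.mem_edgeSet] at he'
      by_cases hq : Q c x y
      · obtain ⟨t, ht, h1, h2, h3⟩ := hT x y hq
        refine Finset.mem_union_right _ (Finset.mem_biUnion.mpr ⟨t, ?_, ?_⟩)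
        · exact Finset.mem_filter.mpr ⟨ht, h3⟩
        · refine Finset.mem_image.mpr ⟨(x, y), ?_, rfl⟩
          exact Finset.mem_filter.mpr ⟨Finset.mem_product.mpr ⟨h1, h2⟩, he'⟩
      · refine Finset.mem_union_left _ (Finset.mem_filter.mpr ⟨Finset.mem_univ _, ?_⟩)
        rw [SimpleGraph.mem_edgeSet]
        exact ⟨he', hq⟩
    refine (Finset.card_le_card hsub).trans ((Finset.card_union_le _ _).trans ?_)
    refine Nat.add_le_add_left (Finset.card_biUnion_le.trans ?_) _
    exact Finset.sum_le_sum fun t _ => Finset.card_image_le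
  exact_mod_cast h1

lemma pairCount_le {V : Type} (G : SimpleGraph V) (A B : Finset V) :
    pairCount G A B ≤ A.card * B.card := by
  unfold pairCount
  refine (Finset.card_filter_le _ _).trans ?_
  rw [Finset.card_product]

lemma colDensity_congr {V C : Type} (G G' : C → SimpleGraph V) (A B : Finset V) (D : Finset C)
    (h : ∀ c ∈ D, ∀ x ∈ A, ∀ y ∈ B, (G c).Adj x y ↔ (G' c).Adj x y) :
    colDensity G A B D = colDensity G' A B D := by
  unfold colDensity
  congr 1
  refine Finset.sum_congr rfl fun c hc => ?_
  congr 1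
  unfold pairCount
  congr 1
  refine Finset.filter_congr fun p hp => ?_
  obtain ⟨h1, h2⟩ := Finset.mem_product.mp hp
  exact h c hc _ h1 _ h2

lemma ColReg_of_sub {V C : Type} (e ε d : ℝ) (he : 0 < e) (he2 : e ≤ 1 / 2) (heε : 2 * e ≤ ε)
    (G G' : C → SimpleGraph V) (A B A' B' : Finset V) (D D' : Finset C) (m m' : ℕ)
    (hm : (m : ℝ) ≤ 2 * m')
    (cA : A.card = m) (cB : B.card = m) (cD : D.card = m)
    (cA' : A'.card = m') (cB' : B'.card = m') (cD' : D'.card = m')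
    (hA : A' ⊆ A) (hB : B' ⊆ B) (hD : D' ⊆ D) (hbad : ¬ BadT e d G (A, B, D))
    (h : ∀ c ∈ D', ∀ x ∈ A', ∀ y ∈ B', (G' c).Adj x y ↔ (G c).Adj x y) :
    ColReg ε d G' A' B' D' := by
  unfold BadT at hbad
  push Not at hbad
  obtain ⟨_, hreg, hdens⟩ := hbad
  simp only at hreg hdens
  have hm0 : (0 : ℝ) ≤ m := by positivity
  have hm0' : (0 : ℝ) ≤ m' := by positivity
  have hem : e * (m : ℝ) ≤ m' := by nlinarith
  have h1 := hreg A' hA B' hB D' hD (by rw [cA, cA']; exact hem) (by rw [cB, cB']; exact hem)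
    (by rw [cD, cD']; exact hem)
  have hc0 := colDensity_congr G' G A' B' D' h
  rw [abs_lt] at h1
  refine ⟨by rw [hc0]; linarith, ?_⟩
  intro A1 hA1 B1 hB1 D1 hD1 k1 k2 k3
  have hε : e * (m : ℝ) ≤ ε * m' := by nlinarith
  rw [cA'] at k1
  rw [cB'] at k2
  rw [cD'] at k3
  have h2 := hreg A1 (hA1.trans hA) B1 (hB1.trans hB) D1 (hD1.trans hD)
    (by rw [cA]; linarith) (by rw [cB]; linarith) (by rw [cD]; linarith)
  rw [abs_lt] at h2
  rw [hc0, colDensity_congr G' G A1 B1 D1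
    (fun c hc x hx y hy => h c (hD1 hc) x (hA1 hx) y (hB1 hy)), abs_lt]
  constructor <;> linarith

lemma card_filter_fst {α β : Type} (S : Finset α) (P : Finset β) (T : Finset (α × β))
    (hT : T ⊆ S ×ˢ P) (p : α → Prop) (hp : ∀ a ∈ S, ∀ b ∈ S, p a → p b → a = b) :
    (T.filter (fun t => p t.1)).card ≤ P.card := by
  refine Finset.card_le_card_of_injOn (fun t => t.2) ?_ ?_
  · intro t ht
    have := hT (Finset.mem_filter.mp ht).1
    exact (Finset.mem_product.mp this).2
  · intro t ht s hs hts
    obtain ⟨h1, h2⟩ := Finset.mem_filter.mp (Finset.mem_coe.mp ht)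
    obtain ⟨g1, g2⟩ := Finset.mem_filter.mp (Finset.mem_coe.mp hs)
    have := hp _ (Finset.mem_product.mp (hT h1)).1 _ (Finset.mem_product.mp (hT g1)).1 h2 g2
    exact Prod.ext this hts

/-! ### Few bad vertices and colours -/

/-- Genuinely regular off-diagonal triples. -/
def OkT {V C : Type} (e : ℝ) (G : C → SimpleGraph V)
    (t : Finset V × Finset V × Finset C) : Prop :=
  RegE e G t.1 t.2.1 t.2.2 ∧ t.1 ≠ t.2.1

lemma GoodChop.Lm {V C : Type} [Fintype V] [Fintype C] {e η : ℝ} {G : C → SimpleGraph V} {K : ℕ}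
    {𝒜 : Finset (Finset V)} {𝒟 : Finset (Finset C)} {m : ℕ} (g : GoodChop e η G K 𝒜 𝒟 m) :
    (𝒜.card : ℝ) * m ≤ Fintype.card V ∧ (𝒟.card : ℝ) * m ≤ Fintype.card C := by
  constructor
  · have h := Finset.card_le_univ (𝒜.biUnion id)
    rw [card_family 𝒜 m g.cA g.dA] at h
    exact_mod_cast h
  · have h := Finset.card_le_univ (𝒟.biUnion id)
    rw [card_family 𝒟 m g.cD g.dD] at h
    exact_mod_cast h

lemma GoodChop.bound {V C : Type} [Fintype V] [Fintype C] {e η : ℝ} {G : C → SimpleGraph V}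
    {K : ℕ} {𝒜 : Finset (Finset V)} {𝒟 : Finset (Finset C)} {m : ℕ}
    (g : GoodChop e η G K 𝒜 𝒟 m) (d : ℝ) (he : 0 < e) :
    e * ((𝒜 ×ˢ 𝒜 ×ˢ 𝒟).filter (BadT e d G)).card * (m : ℝ) ^ 3 +
      (((𝒜 ×ˢ 𝒜 ×ˢ 𝒟).filter (BadT e d G)).filter (fun t => ¬ OkT e G t)).card * (m : ℝ) ^ 3
      ≤ (2 * e + η) * ((Fintype.card V : ℝ) ^ 2 * Fintype.card C) := by
  obtain ⟨h1, h2⟩ := g.Lm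
  set n : ℝ := (Fintype.card V : ℝ)
  set k : ℝ := (Fintype.card C : ℝ)
  set T := (𝒜 ×ˢ 𝒜 ×ˢ 𝒟).filter (BadT e d G) with hT
  have hm0 : (0 : ℝ) ≤ m := by positivity
  have hn0 : (0 : ℝ) ≤ n := by positivity
  have hk0 : (0 : ℝ) ≤ k := by positivity
  have hη0 : 0 ≤ η * n := le_trans hm0 g.mle
  have hTc : (T.card : ℝ) ≤ 𝒜.card * (𝒜.card * 𝒟.card) := by
    have := Finset.card_filter_le (𝒜 ×ˢ 𝒜 ×ˢ 𝒟) (BadT e d G)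
    rw [Finset.card_product, Finset.card_product] at this
    exact_mod_cast this
  have hA : (T.card : ℝ) * (m : ℝ) ^ 3 ≤ n ^ 2 * k := by
    calc (T.card : ℝ) * (m : ℝ) ^ 3 ≤ ((𝒜.card : ℝ) * (𝒜.card * 𝒟.card)) * (m : ℝ) ^ 3 := by gcongr
      _ = ((𝒜.card : ℝ) * m) * ((𝒜.card : ℝ) * m) * ((𝒟.card : ℝ) * m) := by ring
      _ ≤ n * n * k := by gcongr
      _ = _ := by ring
  set I := (𝒜 ×ˢ 𝒜 ×ˢ 𝒟).filter (fun t => ¬ RegE e G t.1 t.2.1 t.2.2) with hI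
  set J := (𝒜 ×ˢ 𝒟).image (fun s => (s.1, s.1, s.2)) with hJ
  have hsub : T.filter (fun t => ¬ OkT e G t) ⊆ I ∪ J := by
    rintro ⟨A, B, D⟩ ht
    obtain ⟨ht1, ht2⟩ := Finset.mem_filter.mp ht
    have ht3 := (Finset.mem_filter.mp ht1).1
    by_cases hr : RegE e G A B D
    · apply Finset.mem_union_right
      have hAB : A = B := by
        by_contra hne
        exact ht2 ⟨hr, hne⟩
      subst hAB
      obtain ⟨k1, k2⟩ := Finset.mem_product.mp ht3
      exact Finset.mem_image.mpr
        ⟨(A, D), Finset.mem_product.mpr ⟨k1, (Finset.mem_product.mp k2).2⟩, rfl⟩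
    · exact Finset.mem_union_left _ (Finset.mem_filter.mpr ⟨ht3, hr⟩)
  have hJc : J.card ≤ 𝒜.card * 𝒟.card := by
    refine Finset.card_image_le.trans ?_
    rw [Finset.card_product]
  have hc : ((T.filter (fun t => ¬ OkT e G t)).card : ℝ) ≤ I.card + 𝒜.card * 𝒟.card := by
    have := (Finset.card_le_card hsub).trans (Finset.card_union_le _ _)
    exact_mod_cast this.trans (Nat.add_le_add_left hJc _)
  have hB : ((𝒜.card : ℝ) * 𝒟.card) * (m : ℝ) ^ 3 ≤ η * (n ^ 2 * k) := by
    calc ((𝒜.card : ℝ) * 𝒟.card) * (m : ℝ) ^ 3 =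
        ((𝒜.card : ℝ) * m) * ((𝒟.card : ℝ) * m) * m := by ring
      _ ≤ n * k * (η * n) := by
        have := g.mle
        gcongr
      _ = _ := by ring
  have hD : ((T.filter (fun t => ¬ OkT e G t)).card : ℝ) * (m : ℝ) ^ 3 ≤
      (I.card + 𝒜.card * 𝒟.card) * (m : ℝ) ^ 3 := by gcongr
  have hE := g.irr
  have hF : e * ((T.card : ℝ) * (m : ℝ) ^ 3) ≤ e * (n ^ 2 * k) := by gcongr
  simp only [← hI] at hE
  nlinarith

lemma low_sum {V C : Type} {e d : ℝ} (he : 0 < e) (he1 : e ≤ 1) {G : C → SimpleGraph V}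
    {A B U W : Finset V} {D F : Finset C}
    (hbad : BadT e d G (A, B, D)) (hok : OkT e G (A, B, D))
    (hU : U ⊆ A) (hW : W ⊆ B) (hF : F ⊆ D)
    (hU1 : U.Nonempty) (hW1 : W.Nonempty) (hF1 : F.Nonempty)
    (h1 : e * A.card ≤ (U.card : ℝ)) (h2 : e * B.card ≤ (W.card : ℝ))
    (h3 : e * D.card ≤ (F.card : ℝ)) :
    ∑ c ∈ F, (pairCount (G c) U W : ℝ) < (d + 2 * e) * ((F.card : ℝ) * U.card * W.card) := by
  obtain ⟨hr, hne⟩ := hok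
  have hd : colDensity G A B D < d + e := by
    rcases hbad with h | h | h
    · exact absurd h hne
    · exact absurd hr h
    · exact h
  have := hr U hU W hW F hF h1 h2 h3
  rw [abs_lt] at this
  simp only at this
  exact sum_lt_of_density G U W F _ (Finset.card_pos.mpr hU1) (Finset.card_pos.mpr hW1)
    (Finset.card_pos.mpr hF1) (by linarith)

lemma badV {V C : Type} [Fintype V] [Fintype C] {e η : ℝ} {G : C → SimpleGraph V}
    {K : ℕ} {𝒜 : Finset (Finset V)} {𝒟 : Finset (Finset C)} {m : ℕ}
    (g : GoodChop e η G K 𝒜 𝒟 m) (d θ : ℝ) (hd : 0 ≤ d) (he : 0 < e) (he1 : e ≤ 1) :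
    ∃ Bad : Finset V,
      (Bad.card : ℝ) * θ ≤ (2 * e + η) * ((Fintype.card V : ℝ) ^ 2 * Fintype.card C) ∧
      ∀ v ∉ Bad, ∑ t ∈ ((𝒜 ×ˢ 𝒜 ×ˢ 𝒟).filter (BadT e d G)).filter (fun t => v ∈ t.1),
        ∑ c ∈ t.2.2, (degIn (G c) v t.2.1 : ℝ) ≤
        θ + (d + 2 * e) * ((Fintype.card V : ℝ) * Fintype.card C) := by
  have hmem : ∀ t ∈ (𝒜 ×ˢ 𝒜 ×ˢ 𝒟).filter (BadT e d G),
      t.1.card = m ∧ t.2.1.card = m ∧ t.2.2.card = m ∧ BadT e d G t := by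
    intro t ht
    obtain ⟨h1, h2⟩ := Finset.mem_filter.mp ht
    simp only [Finset.mem_product] at h1
    exact ⟨g.cA _ h1.1, g.cA _ h1.2.1, g.cD _ h1.2.2, h2⟩
  have hm0 : (0 : ℝ) ≤ m := by positivity
  obtain ⟨Bad, hB1, hB2⟩ := badSet ((𝒜 ×ˢ 𝒜 ×ˢ 𝒟).filter (BadT e d G)) (fun t => t.1)
    (fun v t => ∑ c ∈ t.2.2, (degIn (G c) v t.2.1 : ℝ)) (m : ℝ) ((d + 2 * e) * (m : ℝ) ^ 2) e θ
    ((2 * e + η) * ((Fintype.card V : ℝ) ^ 2 * Fintype.card C)) (by positivity) he.le hm0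
    (OkT e G) (fun t ht => by exact_mod_cast (hmem t ht).1)
    (by
      intro t ht x _
      obtain ⟨_, h2, h3, _⟩ := hmem t ht
      have : ∑ c ∈ t.2.2, (degIn (G c) x t.2.1 : ℝ) ≤ ∑ c ∈ t.2.2, (m : ℝ) := by
        refine Finset.sum_le_sum fun c _ => ?_
        have : degIn (G c) x t.2.1 ≤ m := by
          rw [← h2]; exact Finset.card_filter_le _ _
        exact_mod_cast this
      rw [Finset.sum_const, h3, nsmul_eq_mul] at this
      calc _ ≤ (m : ℝ) * m := this
        _ = _ := by ring)
    (by
      rintro ⟨A, B, D⟩ ht hok U hU hUne hUc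
      obtain ⟨h1, h2, h3, h4⟩ := hmem _ ht
      simp only at h1 h2 h3 hU ⊢
      have hmp := g.mpos
      have := low_sum he he1 h4 hok hU (Finset.Subset.refl B) (Finset.Subset.refl D) hUne
        (Finset.card_pos.mp (by omega)) (Finset.card_pos.mp (by omega)) (by rw [h1]; exact hUc)
        (by rw [h2]; nlinarith) (by rw [h3]; nlinarith)
      rw [sum_degIn]
      rw [h2, h3] at this
      calc _ < _ := this
        _ = _ := by ring)
    (g.bound d he)
  refine ⟨Bad, hB1, fun v hv => (hB2 v hv).trans ?_⟩
  have hc : (((𝒜 ×ˢ 𝒜 ×ˢ 𝒟).filter (BadT e d G)).filter (fun t => v ∈ t.1)).card ≤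
      (𝒜 ×ˢ 𝒟).card := by
    refine le_trans (le_of_eq ?_) (card_filter_fst 𝒜 (𝒜 ×ˢ 𝒟) ((𝒜 ×ˢ 𝒜 ×ˢ 𝒟).filter (BadT e d G))
      (Finset.filter_subset _ _) (fun A => v ∈ A) ?_)
    · congr
    intro A hA B hB h1 h2
    by_contra hne
    exact Finset.disjoint_left.mp (g.dA A hA B hB hne) h1 h2
  rw [Finset.card_product] at hc
  have hcR : ((((𝒜 ×ˢ 𝒜 ×ˢ 𝒟).filter (BadT e d G)).filter (fun t => v ∈ t.1)).card : ℝ) ≤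
      𝒜.card * 𝒟.card := by exact_mod_cast hc
  obtain ⟨h1, h2⟩ := g.Lm
  gcongr θ + ?_
  calc (d + 2 * e) * (m : ℝ) ^ 2 * _ ≤ (d + 2 * e) * (m : ℝ) ^ 2 * ((𝒜.card : ℝ) * 𝒟.card) := by
        gcongr
    _ = (d + 2 * e) * (((𝒜.card : ℝ) * m) * ((𝒟.card : ℝ) * m)) := by ring
    _ ≤ _ := by gcongr

lemma badC {V C : Type} [Fintype V] [Fintype C] {e η : ℝ} {G : C → SimpleGraph V}
    {K : ℕ} {𝒜 : Finset (Finset V)} {𝒟 : Finset (Finset C)} {m : ℕ}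
    (g : GoodChop e η G K 𝒜 𝒟 m) (d θ : ℝ) (hd : 0 ≤ d) (he : 0 < e) (he1 : e ≤ 1) :
    ∃ Bad : Finset C,
      (Bad.card : ℝ) * θ ≤ (2 * e + η) * ((Fintype.card V : ℝ) ^ 2 * Fintype.card C) ∧
      ∀ c ∉ Bad, ∑ t ∈ ((𝒜 ×ˢ 𝒜 ×ˢ 𝒟).filter (BadT e d G)).filter (fun t => c ∈ t.2.2),
        (pairCount (G c) t.1 t.2.1 : ℝ) ≤
        θ + (d + 2 * e) * (Fintype.card V : ℝ) ^ 2 := by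
  have hmem : ∀ t ∈ (𝒜 ×ˢ 𝒜 ×ˢ 𝒟).filter (BadT e d G),
      t.1.card = m ∧ t.2.1.card = m ∧ t.2.2.card = m ∧ BadT e d G t := by
    intro t ht
    obtain ⟨h1, h2⟩ := Finset.mem_filter.mp ht
    simp only [Finset.mem_product] at h1
    exact ⟨g.cA _ h1.1, g.cA _ h1.2.1, g.cD _ h1.2.2, h2⟩
  have hm0 : (0 : ℝ) ≤ m := by positivity
  obtain ⟨Bad, hB1, hB2⟩ := badSet ((𝒜 ×ˢ 𝒜 ×ˢ 𝒟).filter (BadT e d G)) (fun t => t.2.2)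
    (fun c t => (pairCount (G c) t.1 t.2.1 : ℝ)) (m : ℝ) ((d + 2 * e) * (m : ℝ) ^ 2) e θ
    ((2 * e + η) * ((Fintype.card V : ℝ) ^ 2 * Fintype.card C)) (by positivity) he.le hm0
    (OkT e G) (fun t ht => by exact_mod_cast (hmem t ht).2.2.1)
    (by
      intro t ht x _
      obtain ⟨h1, h2, _, _⟩ := hmem t ht
      have := pairCount_le (G x) t.1 t.2.1
      rw [h1, h2, ← pow_two] at this
      exact_mod_cast this)
    (by
      rintro ⟨A, B, D⟩ ht hok U hU hUne hUc
      obtain ⟨h1, h2, h3, h4⟩ := hmem _ ht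
      simp only at h1 h2 h3 hU ⊢
      have hmp := g.mpos
      have := low_sum he he1 h4 hok (Finset.Subset.refl A) (Finset.Subset.refl B) hU
        (Finset.card_pos.mp (by omega)) (Finset.card_pos.mp (by omega)) hUne
        (by rw [h1]; nlinarith) (by rw [h2]; nlinarith) (by rw [h3]; exact hUc)
      rw [h1, h2] at this
      calc _ < _ := this
        _ = _ := by ring)
    (g.bound d he)
  refine ⟨Bad, hB1, fun c hv => (hB2 c hv).trans ?_⟩
  have hc : (((𝒜 ×ˢ 𝒜 ×ˢ 𝒟).filter (BadT e d G)).filter (fun t => c ∈ t.2.2)).card ≤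
      (𝒜 ×ˢ 𝒜).card := by
    refine Finset.card_le_card_of_injOn (fun t => (t.1, t.2.1)) ?_ ?_
    · intro t ht
      have := (Finset.mem_filter.mp (Finset.mem_filter.mp ht).1).1
      simp only [Finset.mem_product] at this
      exact Finset.mem_coe.mpr (Finset.mem_product.mpr ⟨this.1, this.2.1⟩)
    · intro t ht s hs hts
      obtain ⟨h1, h2⟩ := Finset.mem_filter.mp (Finset.mem_coe.mp ht)
      obtain ⟨g1, g2⟩ := Finset.mem_filter.mp (Finset.mem_coe.mp hs)
      have h1' := (Finset.mem_filter.mp h1).1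
      have g1' := (Finset.mem_filter.mp g1).1
      simp only [Finset.mem_product] at h1' g1'
      simp only [Prod.mk.injEq] at hts
      refine Prod.ext hts.1 (Prod.ext hts.2 ?_)
      by_contra hne
      exact Finset.disjoint_left.mp (g.dD _ h1'.2.2 _ g1'.2.2 hne) h2 g2
  rw [Finset.card_product] at hc
  have hcR : ((((𝒜 ×ˢ 𝒜 ×ˢ 𝒟).filter (BadT e d G)).filter (fun t => c ∈ t.2.2)).card : ℝ) ≤
      𝒜.card * 𝒜.card := by exact_mod_cast hc
  obtain ⟨h1, h2⟩ := g.Lm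
  gcongr θ + ?_
  calc (d + 2 * e) * (m : ℝ) ^ 2 * _ ≤ (d + 2 * e) * (m : ℝ) ^ 2 * ((𝒜.card : ℝ) * 𝒜.card) := by
        gcongr
    _ = (d + 2 * e) * ((𝒜.card : ℝ) * m) ^ 2 := by ring
    _ ≤ _ := by gcongr

/-! ### Assembling -/

set_option maxHeartbeats 1000000 in
lemma main_step (L₀ : ℕ) (ε δ : ℝ) (hε : 0 < ε) (hδ : 0 < δ) (hδ1 : δ ≤ 1)
    (κ θ e η : ℝ) (hκ : 0 < κ) (hκ1 : κ ≤ 1 / 4) (hθ : 0 < θ) (he : 0 < e)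
    (he2 : e ≤ 1 / 2) (heε : 2 * e ≤ ε) (hη : 0 < η) (hηe : η ≤ e)
    (hηL : η * (L₀ + 1) ≤ δ / 2)
    (heκ : 3 * e ≤ κ ^ 2 * θ * δ) (hloss : θ + 2 * e / δ < ε)
    (hsmall : 2 * η + 2 * κ + 2 * κ / δ ≤ ε) (n₀ : ℕ)
    (V C : Type) [Fintype V] [Fintype C] (G : C → SimpleGraph V) (n : ℕ)
    (hn : Fintype.card V = n) (hn0 : 0 < n) (hC1 : δ * (n : ℝ) ≤ (Fintype.card C : ℝ))
    (hC2 : (Fintype.card C : ℝ) ≤ (n : ℝ) / δ) (d : ℝ) (hd : 0 ≤ d)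
    (𝒜 : Finset (Finset V)) (𝒟 : Finset (Finset C)) (m : ℕ) (g : GoodChop e η G n₀ 𝒜 𝒟 m) :
    ∃ (L M : ℕ) (Vp : ℕ → Finset V) (Cp : ℕ → Finset C) (G' : C → SimpleGraph V),
        (∀ c, G' c ≤ G c) ∧
        (∀ i j, i ≠ j → Disjoint (Vp i) (Vp j)) ∧
        ((Finset.range (L + 1)).biUnion Vp = (univ : Finset V)) ∧
        (∀ i j, i ≠ j → Disjoint (Cp i) (Cp j)) ∧
        ((Finset.range (M + 1)).biUnion Cp = (univ : Finset C)) ∧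
        (L₀ ≤ L ∧ L ≤ n₀ ∧ L₀ ≤ M ∧ M ≤ n₀ ∧
          (((Vp 0).card : ℝ) + ((Cp 0).card : ℝ) ≤ ε * (n : ℝ))) ∧
        (∃ m : ℕ, (∀ i, 1 ≤ i → i ≤ L → (Vp i).card = m) ∧
          (∀ j, 1 ≤ j → j ≤ M → (Cp j).card = m)) ∧
        (∀ v : V, (∑ c : C, (degOf (G c) v : ℝ)) - (3 * d / δ ^ 2 + ε) * (n : ℝ) ^ 2 <
          ∑ c : C, (degOf (G' c) v : ℝ)) ∧
        (∀ c : C, (edgeCnt (G c) : ℝ) - (3 * d / δ ^ 2 + ε) * (n : ℝ) ^ 2 <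
          (edgeCnt (G' c) : ℝ)) ∧
        (∀ c : C, ∀ i, 1 ≤ i → i ≤ L →
          (∃ x ∈ Vp i, ∃ y ∈ Vp i, (G' c).Adj x y) → c ∈ Cp 0) ∧
        (∀ h i, 1 ≤ h → h ≤ L → 1 ≤ i → i ≤ L → h ≠ i → ∀ j, 1 ≤ j → j ≤ M →
          (∀ c ∈ Cp j, pairCount (G' c) (Vp h) (Vp i) = 0) ∨
          ColReg ε d G' (Vp h) (Vp i) (Cp j)) := by
  have hnR : (0 : ℝ) < n := by exact_mod_cast hn0
  have hVn : (Fintype.card V : ℝ) = n := by rw [hn]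
  have hn2 : (0 : ℝ) < (n : ℝ) ^ 2 := by positivity
  obtain ⟨BV, hBV1, hBV2⟩ := badV g d (θ * (n : ℝ) ^ 2) hd he (by linarith)
  obtain ⟨BC, hBC1, hBC2⟩ := badC g d (θ * (n : ℝ) ^ 2) hd he (by linarith)
  rw [hVn] at hBV1 hBC1
  simp only [hVn] at hBV2 hBC2
  set k : ℝ := (Fintype.card C : ℝ) with hk
  have hk0 : 0 ≤ k := by positivity
  have hkn : δ * k ≤ n := by
    rw [le_div_iff₀ hδ] at hC2; linarith
  have hcoef : 2 * e + η ≤ κ ^ 2 * θ * δ := by linarith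
  have hBV : (BV.card : ℝ) ≤ κ ^ 2 * (Fintype.card V : ℝ) := by
    rw [hVn]
    have h1 : (BV.card : ℝ) * (θ * (n : ℝ) ^ 2) ≤ (κ ^ 2 * n) * (θ * (n : ℝ) ^ 2) := by
      calc _ ≤ _ := hBV1
        _ ≤ (κ ^ 2 * θ * δ) * ((n : ℝ) ^ 2 * k) := by gcongr
        _ = (κ ^ 2 * θ * (n : ℝ) ^ 2) * (δ * k) := by ring
        _ ≤ (κ ^ 2 * θ * (n : ℝ) ^ 2) * n := by gcongr
        _ = _ := by ring
    exact le_of_mul_le_mul_right h1 (by positivity)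
  have hBC : (BC.card : ℝ) ≤ κ ^ 2 * (Fintype.card C : ℝ) := by
    rw [← hk]
    have h1 : (BC.card : ℝ) * (θ * (n : ℝ) ^ 2) ≤ (κ ^ 2 * k) * (θ * (n : ℝ) ^ 2) := by
      calc _ ≤ _ := hBC1
        _ ≤ (κ ^ 2 * θ * δ) * ((n : ℝ) ^ 2 * k) := by gcongr
        _ ≤ (κ ^ 2 * θ * 1) * ((n : ℝ) ^ 2 * k) := by gcongr
        _ = _ := by ring
    exact le_of_mul_le_mul_right h1 (by positivity)
  have hlA := g.lA
  have hlD := g.lD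
  have hmle := g.mle
  rw [hVn] at hlA hlD hmle
  obtain ⟨L, Vp, idx, hL, hVd, hVu, hV0, hVc, hVi, hinj⟩ :=
    prep 𝒜 m g.mpos g.cA g.dA BV κ (η * n) hκ (by linarith) hlA hBV
  obtain ⟨M, Cp, jdx, hM, hCd, hCu, hC0, hCc, hCi, hjnj⟩ :=
    prep 𝒟 m g.mpos g.cD g.dD BC κ (η * n) hκ (by linarith) hlD hBC
  rw [hVn] at hV0 hVc
  rw [← hk] at hC0 hCc
  have eqV : ∀ i j x, x ∈ Vp i → x ∈ Vp j → i = j := by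
    intro i j x hi hj
    by_contra hne
    exact Finset.disjoint_left.mp (hVd i j hne) hi hj
  have eqC : ∀ i j x, x ∈ Cp i → x ∈ Cp j → i = j := by
    intro i j x hi hj
    by_contra hne
    exact Finset.disjoint_left.mp (hCd i j hne) hi hj
  set Q : C → V → V → Prop := fun c x y => ∃ h i j, 1 ≤ h ∧ h ≤ L ∧ 1 ≤ i ∧ i ≤ L ∧ 1 ≤ j ∧ j ≤ M ∧
    x ∈ Vp h ∧ y ∈ Vp i ∧ c ∈ Cp j ∧ BadT e d G (idx h, idx i, jdx j) with hQdef
  have hQ : ∀ c x y, Q c x y → Q c y x := by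
    rintro c x y ⟨h, i, j, h1, h2, h3, h4, h5, h6, hx, hy, hc, hb⟩
    exact ⟨i, h, j, h3, h4, h1, h2, h5, h6, hy, hx, hc, BadT_symm hb⟩
  have hQT : ∀ c x y, Q c x y → ∃ t ∈ (𝒜 ×ˢ 𝒜 ×ˢ 𝒟).filter (BadT e d G),
      x ∈ t.1 ∧ y ∈ t.2.1 ∧ c ∈ t.2.2 := by
    rintro c x y ⟨h, i, j, h1, h2, h3, h4, h5, h6, hx, hy, hc, hb⟩
    refine ⟨(idx h, idx i, jdx j), ?_, (hVi h h1 h2).2.1 hx, (hVi i h3 h4).2.1 hy,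
      (hCi j h5 h6).2.1 hc⟩
    simp only [Finset.mem_filter, Finset.mem_product]
    exact ⟨⟨(hVi h h1 h2).1, (hVi i h3 h4).1, (hCi j h5 h6).1⟩, hb⟩
  have hfin : ∀ x : ℝ, x ≤ θ * (n : ℝ) ^ 2 + (d + 2 * e) * ((n : ℝ) ^ 2 / δ) →
      x < (3 * d / δ ^ 2 + ε) * (n : ℝ) ^ 2 := by
    intro x hx
    have h1 : d / δ ≤ 3 * d / δ ^ 2 := by
      rw [div_le_div_iff₀ hδ (by positivity)]
      have : d * δ * δ ≤ d * δ * 3 := by gcongr; linarith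
      nlinarith
    have h2 : θ * (n : ℝ) ^ 2 + (d + 2 * e) * ((n : ℝ) ^ 2 / δ) =
        (d / δ + (θ + 2 * e / δ)) * (n : ℝ) ^ 2 := by
      field_simp
      ring
    rw [h2] at hx
    refine lt_of_le_of_lt hx (mul_lt_mul_of_pos_right (by linarith) hn2)
  have hpos : 0 < (3 * d / δ ^ 2 + ε) * (n : ℝ) ^ 2 := by positivity
  refine ⟨L, M, Vp, Cp, cutG G Q hQ, fun c x y h => h.1, hVd, hVu, hCd, hCu,
    ⟨?_, hL.trans g.kA, ?_, hM.trans g.kD, ?_⟩, ⟨m - ⌊κ * m⌋₊, fun i h1 h2 => (hVi i h1 h2).2.2.1,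
    fun i h1 h2 => (hCi i h1 h2).2.2.1⟩, ?_, ?_, ?_, ?_⟩
  · have h1 : (n : ℝ) ≤ η * n + 2 * κ * n + L * (η * n) := by
      calc (n : ℝ) ≤ _ := hVc
        _ ≤ _ := by gcongr
    have h2 : (1 : ℝ) ≤ η + 2 * κ + L * η := by
      refine le_of_mul_le_mul_right (a := (n : ℝ)) ?_ hnR
      linarith
    have h3 : η * ((L₀ : ℝ) + 1) ≤ η * (L + 1) := by linarith
    have h4 := le_of_mul_le_mul_left h3 hη
    have h5 : (L₀ : ℝ) ≤ L := by linarith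
    exact_mod_cast h5
  · have h1 : k ≤ η * n + 2 * κ * k + M * (η * n) := by
      calc k ≤ _ := hCc
        _ ≤ _ := by gcongr
    have h2 : δ / 2 ≤ η + M * η := by
      refine le_of_mul_le_mul_right (a := (n : ℝ)) ?_ hnR
      have h9 : κ * k ≤ 1 / 4 * k := by gcongr
      linarith
    have h3 : η * ((L₀ : ℝ) + 1) ≤ η * (M + 1) := by linarith
    have h4 := le_of_mul_le_mul_left h3 hη
    have h5 : (L₀ : ℝ) ≤ M := by linarith
    exact_mod_cast h5
  · calc ((Vp 0).card : ℝ) + (Cp 0).card ≤ (η * n + 2 * κ * n) + (η * n + 2 * κ * k) := by gcongr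
      _ ≤ (η * n + 2 * κ * n) + (η * n + 2 * κ * (n / δ)) := by gcongr
      _ = (2 * η + 2 * κ + 2 * κ / δ) * n := by ring
      _ ≤ _ := by gcongr
  · intro v
    by_cases hv : v ∈ BV
    · have := loss_vertex G Q hQ ∅ v (by
        rintro c y ⟨h, i, j, h1, h2, h3, h4, h5, h6, hx, hy, hc, hb⟩
        exact absurd hv (Finset.disjoint_left.mp (hVi h h1 h2).2.2.2 hx))
      simp only [Finset.filter_empty, Finset.sum_empty, add_zero] at this
      linarith
    · have := loss_vertex G Q hQ ((𝒜 ×ˢ 𝒜 ×ˢ 𝒟).filter (BadT e d G)) v (fun c y h => hQT c v y h)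
      have h2 := hfin _ ((hBV2 v hv).trans (by
        gcongr
        calc (n : ℝ) * k ≤ n * (n / δ) := by gcongr
          _ = _ := by ring))
      linarith
  · intro c
    by_cases hc : c ∈ BC
    · have := loss_colour G Q hQ ∅ c (by
        rintro x y ⟨h, i, j, h1, h2, h3, h4, h5, h6, hx, hy, hc', hb⟩
        exact absurd hc (Finset.disjoint_left.mp (hCi j h5 h6).2.2.2 hc'))
      simp only [Finset.filter_empty, Finset.sum_empty, add_zero] at this
      linarith
    · have := loss_colour G Q hQ ((𝒜 ×ˢ 𝒜 ×ˢ 𝒟).filter (BadT e d G)) c (fun x y h => hQT c x y h)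
      have h2 := hfin _ ((hBC2 c hc).trans (by
        gcongr
        rw [le_div_iff₀ hδ]
        nlinarith))
      linarith
  · rintro c i h1 h2 ⟨x, hx, y, hy, hadj⟩
    have hcu : c ∈ (Finset.range (M + 1)).biUnion Cp := by rw [hCu]; exact Finset.mem_univ c
    obtain ⟨j, hj, hcj⟩ := Finset.mem_biUnion.mp hcu
    rw [Finset.mem_range] at hj
    rcases Nat.eq_zero_or_pos j with h0 | h0
    · rwa [h0] at hcj
    · exact absurd ⟨i, i, j, h1, h2, h1, h2, h0, by omega, hx, hy, hcj, Or.inl rfl⟩ hadj.2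
  · intro h i h1 h2 h3 h4 hne j h5 h6
    by_cases hb : BadT e d G (idx h, idx i, jdx j)
    · left
      intro c hc
      unfold pairCount
      rw [Finset.card_eq_zero, Finset.filter_eq_empty_iff]
      rintro ⟨x, y⟩ hxy hadj
      obtain ⟨hx, hy⟩ := Finset.mem_product.mp hxy
      exact hadj.2 ⟨h, i, j, h1, h2, h3, h4, h5, h6, hx, hy, hc, hb⟩
    · right
      obtain ⟨a1, a2, a3, _⟩ := hVi h h1 h2
      obtain ⟨b1, b2, b3, _⟩ := hVi i h3 h4
      obtain ⟨c1, c2, c3, _⟩ := hCi j h5 h6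
      have hf : (⌊κ * m⌋₊ : ℝ) ≤ κ * m := Nat.floor_le (by positivity)
      have hm0 : (0 : ℝ) ≤ m := by positivity
      have hm : (m : ℝ) ≤ 2 * ((m - ⌊κ * m⌋₊ : ℕ) : ℝ) := by
        have h1 : (m : ℝ) ≤ ((m - ⌊κ * m⌋₊ : ℕ) : ℝ) + (⌊κ * m⌋₊ : ℝ) := by
          have : m ≤ (m - ⌊κ * (m : ℝ)⌋₊) + ⌊κ * (m : ℝ)⌋₊ := by omega
          exact_mod_cast this
        nlinarith
      refine ColReg_of_sub e ε d he he2 heε G _ (idx h) (idx i) _ _ (jdx j) _ m (m - ⌊κ * m⌋₊) hm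
        (g.cA _ a1) (g.cA _ b1) (g.cD _ c1) a3 b3 c3 a2 b2 c2 hb ?_
      intro c hc x hx y hy
      refine ⟨fun h => h.1, fun hadj => ⟨hadj, ?_⟩⟩
      rintro ⟨h', i', j', _, _, _, _, _, _, hx', hy', hc', hb'⟩
      rw [eqV _ _ _ hx' hx, eqV _ _ _ hy' hy, eqC _ _ _ hc' hc] at hb'
      exact (hb hb').elim

/-! ## Statement 8 -/

theorem stmt8 (L₀ : ℕ) (hL₀ : 1 ≤ L₀) (ε δ : ℝ) (hε : 0 < ε) (hδ : 0 < δ) :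
    ∃ n₀ : ℕ, ∀ d : ℝ, 0 ≤ d → d < 1 →
    ∀ (V : Type) [Fintype V] (C : Type) [Fintype C] (G : C → SimpleGraph V) (n : ℕ),
      Fintype.card V = n → n₀ ≤ n →
      δ * (n : ℝ) ≤ (Fintype.card C : ℝ) → (Fintype.card C : ℝ) ≤ (n : ℝ) / δ →
      ∃ (L M : ℕ) (Vp : ℕ → Finset V) (Cp : ℕ → Finset C) (G' : C → SimpleGraph V),
        (∀ c, G' c ≤ G c) ∧
        (∀ i j, i ≠ j → Disjoint (Vp i) (Vp j)) ∧
        ((Finset.range (L + 1)).biUnion Vp = (univ : Finset V)) ∧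
        (∀ i j, i ≠ j → Disjoint (Cp i) (Cp j)) ∧
        ((Finset.range (M + 1)).biUnion Cp = (univ : Finset C)) ∧
        (L₀ ≤ L ∧ L ≤ n₀ ∧ L₀ ≤ M ∧ M ≤ n₀ ∧
          (((Vp 0).card : ℝ) + ((Cp 0).card : ℝ) ≤ ε * (n : ℝ))) ∧
        (∃ m : ℕ, (∀ i, 1 ≤ i → i ≤ L → (Vp i).card = m) ∧
          (∀ j, 1 ≤ j → j ≤ M → (Cp j).card = m)) ∧
        (∀ v : V, (∑ c : C, (degOf (G c) v : ℝ)) - (3 * d / δ ^ 2 + ε) * (n : ℝ) ^ 2 <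
          ∑ c : C, (degOf (G' c) v : ℝ)) ∧
        (∀ c : C, (edgeCnt (G c) : ℝ) - (3 * d / δ ^ 2 + ε) * (n : ℝ) ^ 2 <
          (edgeCnt (G' c) : ℝ)) ∧
        (∀ c : C, ∀ i, 1 ≤ i → i ≤ L →
          (∃ x ∈ Vp i, ∃ y ∈ Vp i, (G' c).Adj x y) → c ∈ Cp 0) ∧
        (∀ h i, 1 ≤ h → h ≤ L → 1 ≤ i → i ≤ L → h ≠ i → ∀ j, 1 ≤ j → j ≤ M →
          (∀ c ∈ Cp j, pairCount (G' c) (Vp h) (Vp i) = 0) ∨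
          ColReg ε d G' (Vp h) (Vp i) (Cp j)) := by
  rcases lt_or_ge 1 δ with h1 | hδ1
  · refine ⟨1, fun d _ _ V _ C _ G n _ hn hC1 hC2 => ?_⟩
    exfalso
    have hnR : (1 : ℝ) ≤ n := by exact_mod_cast hn
    rw [le_div_iff₀ hδ] at hC2
    have h2 : δ * (n : ℝ) * δ ≤ n := le_trans (by gcongr) hC2
    nlinarith [mul_pos hδ hδ]
  · set ε₀ := min ε (1 / 2) with hε₀
    have h0 : 0 < ε₀ := lt_min hε (by norm_num)
    have h0ε : ε₀ ≤ ε := min_le_left _ _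
    have h02 : ε₀ ≤ 1 / 2 := min_le_right _ _
    set κ := ε₀ * δ / 8 with hκ
    set θ := ε₀ / 4 with hθ
    set e := κ ^ 2 * θ * δ / 4 with he
    set η := min e (δ / (2 * (L₀ + 1))) with hη
    have hκ0 : 0 < κ := by positivity
    have hθ0 : 0 < θ := by positivity
    have he0 : 0 < e := by positivity
    have hη0 : 0 < η := lt_min he0 (by positivity)
    have hηe : η ≤ e := min_le_left _ _
    have hκε : κ ≤ ε₀ / 8 := by
      rw [hκ]
      have : ε₀ * δ ≤ ε₀ * 1 := by gcongr
      linarith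
    have hκ1 : κ ≤ 1 / 16 := by linarith
    have hκ2 : κ ^ 2 ≤ 1 := by nlinarith
    have heδ : e / δ ≤ θ / 4 := by
      rw [div_le_iff₀ hδ, he]
      have : κ ^ 2 * (θ * δ) ≤ 1 * (θ * δ) := by gcongr
      linarith
    have heθ : e ≤ θ / 4 := by
      rw [div_le_iff₀ hδ] at heδ
      have : θ / 4 * δ ≤ θ / 4 * 1 := by gcongr
      linarith
    have hκδ : κ / δ = ε₀ / 8 := by rw [hκ]; field_simp
    obtain ⟨K, hK1, hK⟩ := regularity e η δ he0 hη0 hδ hδ1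
    refine ⟨K, fun d hd _ V _ C _ G n hn hnK hC1 hC2 => ?_⟩
    obtain ⟨𝒜, 𝒟, m, g⟩ := hK V C G (by rw [hn]; exact hnK) (by rw [hn]; exact hC1)
      (by rw [hn]; exact hC2)
    have hηL : η * ((L₀ : ℝ) + 1) ≤ δ / 2 := by
      calc η * ((L₀ : ℝ) + 1) ≤ (δ / (2 * (L₀ + 1))) * ((L₀ : ℝ) + 1) := by
            gcongr
            exact min_le_right _ _
        _ = _ := by field_simp
    have hκδ2 : 2 * κ / δ = 2 * (κ / δ) := by ring
    have heδ2 : 2 * e / δ = 2 * (e / δ) := by ring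
    exact main_step L₀ ε δ hε hδ hδ1 κ θ e η hκ0 (by linarith) hθ0 he0 (by linarith)
      (by linarith) hη0 hηe hηL (by rw [he]; nlinarith [mul_pos (mul_pos (pow_pos hκ0 2) hθ0) hδ])
      (by rw [heδ2]; linarith) (by rw [hκδ2, hκδ]; linarith) K V C G n hn
      (by omega) hC1 hC2 d hd 𝒜 𝒟 m g
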